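/- arXiv:2304.14821 — 6 statements merged into one kernel-verified Lean document; each statement's English description precedes it below -/
import Mathlib

section
/- For all three-valued SCL terms s and t over A: EqCL^U ⊢ s = t if and only if CP_cl^U ⊢ f(s) = f(t). (That is, the equational theory EqCL^U of three-valued conditional logic completely axiomatises the conditional short-circuit logic CℓSCL^U determined by CP_cl^U via the translation f.) -/
/-!
Both implications are proved inside algebras rather than by manipulating derivations: the
Lindenbaum quotient of each proof system is a model of its own axioms, so it suffices that every
model of one system carries the operations of the other and satisfies its axioms.

*From `EqCL^U` to `CP_cl^U`.* In a model of `CP_cl^U` the operations `¬x = F ◁ x ▷ T`,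
`x ⩓ y = y ◁ x ▷ F` and `x ⩔ y = T ◁ x ▷ y` satisfy the axioms of `EqCL^U`. This is a short
computation with (CP4) and the memory axiom; only (Com) needs (CL2).

*From `CP_cl^U` to `EqCL^U`.* In a model of `EqCL^U` put `x ◁ y ▷ z = (y ⩓ x) ⩔ (¬y ⩓ z)`.
From the axioms one derives that `¬` is an involution, the units, idempotence and, with more effort,
associativity of `⩓` (`and_assoc`). For a fixed `a` the relation `a ⩓ x = a ⩓ y` ("equal once `a`
has been evaluated to true") is then a congruence in which `a` acts as `T` (`and_compl_congr`,
`and_and_congr`). Writing `D a = a ⩔ ¬a`, which is `T` where `a` is defined and `U` elsewhere, the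
(Mem) axiom gives a case distinction: if `x` and `y` are fixed by `D a ⩓ _` (they evaluate `a`), and
they agree after `a` and after `¬a`, then `x = y` (`eq_of_cases`). Case distinction on the right
conditions reduces (CP4), (CPmem) and (CL2) to trivial instances; (Com) enters through
`D a ⩓ D b = D b ⩓ D a`, which shows that the right-hand side of (CL2) evaluates its inner
condition.
-/

/-- Three-valued conditional expressions over a set `A` of atoms. -/
inductive ExprU (A : Type) : Type
  | T : ExprU A
  | F : ExprU A
  | U : ExprU A
  | atom : A → ExprU A
  | cond : ExprU A → ExprU A → ExprU A → ExprU A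

/-- Derivability from the axiom system CP_cl^U = CP + (CPmem) + (CL2) + (CP-U). -/
inductive DerClU {A : Type} : ExprU A → ExprU A → Prop
  | refl (P : ExprU A) : DerClU P P
  | symm {P Q : ExprU A} : DerClU P Q → DerClU Q P
  | trans {P Q R : ExprU A} : DerClU P Q → DerClU Q R → DerClU P R
  | congr {P P' Q Q' R R' : ExprU A} :
      DerClU P P' → DerClU Q Q' → DerClU R R' →
      DerClU (.cond P Q R) (.cond P' Q' R')
  | cp1 (x y : ExprU A) : DerClU (.cond x .T y) x
  | cp2 (x y : ExprU A) : DerClU (.cond x .F y) y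
  | cp3 (x : ExprU A) : DerClU (.cond .T x .F) x
  | cp4 (x y z u v : ExprU A) :
      DerClU (.cond x (.cond y z u) v) (.cond (.cond x y v) z (.cond x u v))
  | cpmem (x y z u v w : ExprU A) :
      DerClU (.cond x y (.cond z u (.cond v y w))) (.cond x y (.cond z u w))
  | cl2 (x y z u v w : ExprU A) :
      DerClU (.cond (.cond x y z) u (.cond v y w)) (.cond (.cond x u v) y (.cond z u w))
  | cpu (x y : ExprU A) : DerClU (.cond x .U y) .U

/-- Three-valued SCL terms over A: T, F, U, atoms, negation ¬, short-circuit
conjunction ⩓ and short-circuit disjunction ⩔. -/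
inductive STermU (A : Type) : Type
  | T : STermU A
  | F : STermU A
  | U : STermU A
  | atom : A → STermU A
  | neg : STermU A → STermU A
  | and : STermU A → STermU A → STermU A
  | or : STermU A → STermU A → STermU A

/-- Derivability from EqCL^U = EqMSCL + (Com) + (Und):
(Neg) F = ¬T, (Or) x ⩔ y = ¬(¬x ⩓ ¬y), (Tand) T ⩓ x = x, (Abs) x ⩓ (x ⩔ y) = x,
(Mem) (x ⩔ y) ⩓ z = (¬x ⩓ (y ⩓ z)) ⩔ (x ⩓ z),
(Com) (x ⩓ y) ⩔ (y ⩓ x) = (y ⩓ x) ⩔ (x ⩓ y), (Und) ¬U = U. -/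
inductive DerEqCLU {A : Type} : STermU A → STermU A → Prop
  | refl (s : STermU A) : DerEqCLU s s
  | symm {s t : STermU A} : DerEqCLU s t → DerEqCLU t s
  | trans {s t u : STermU A} : DerEqCLU s t → DerEqCLU t u → DerEqCLU s u
  | negCongr {s t : STermU A} : DerEqCLU s t → DerEqCLU (.neg s) (.neg t)
  | andCongr {s s' t t' : STermU A} :
      DerEqCLU s s' → DerEqCLU t t' → DerEqCLU (.and s t) (.and s' t')
  | orCongr {s s' t t' : STermU A} :
      DerEqCLU s s' → DerEqCLU t t' → DerEqCLU (.or s t) (.or s' t')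
  | negAx : DerEqCLU (A := A) .F (.neg .T)
  | orAx (x y : STermU A) : DerEqCLU (.or x y) (.neg (.and (.neg x) (.neg y)))
  | tand (x : STermU A) : DerEqCLU (.and .T x) x
  | abs (x y : STermU A) : DerEqCLU (.and x (.or x y)) x
  | mem (x y z : STermU A) :
      DerEqCLU (.and (.or x y) z) (.or (.and (.neg x) (.and y z)) (.and x z))
  | com (x y : STermU A) :
      DerEqCLU (.or (.and x y) (.and y x)) (.or (.and y x) (.and x y))
  | und : DerEqCLU (A := A) (.neg .U) .U

/-- The translation f from three-valued SCL terms to three-valued conditional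
expressions: f(U) = U, f(¬t) = F ◁ f(t) ▷ T, f(t₁ ⩓ t₂) = f(t₂) ◁ f(t₁) ▷ F,
f(t₁ ⩔ t₂) = T ◁ f(t₁) ▷ f(t₂). -/
def sclToCondU {A : Type} : STermU A → ExprU A
  | .T => .T
  | .F => .F
  | .U => .U
  | .atom a => .atom a
  | .neg t => .cond .F (sclToCondU t) .T
  | .and s t => .cond (sclToCondU t) (sclToCondU s) .F
  | .or s t => .cond .T (sclToCondU s) (sclToCondU t)

/-- Models of `CP_cl^U`; `cd x y z` is the conditional `x ◁ y ▷ z`, with condition `y`. -/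
class CPAlg (M : Type) where
  T : M
  F : M
  U : M
  cd : M → M → M → M
  cp1 (x y : M) : cd x T y = x
  cp2 (x y : M) : cd x F y = y
  cp3 (x : M) : cd T x F = x
  cp4 (x y z u v : M) : cd x (cd y z u) v = cd (cd x y v) z (cd x u v)
  cpmem (x y z u v w : M) : cd x y (cd z u (cd v y w)) = cd x y (cd z u w)
  cl2 (x y z u v w : M) : cd (cd x y z) u (cd v y w) = cd (cd x u v) y (cd z u w)
  cpu (x y : M) : cd x U y = U

/-- Models of `EqCL^U`, with `⊤`, `⊥`, `ᶜ`, `⊓`, `⊔` standing for `T`, `F`, `¬`, `⩓`, `⩔`.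
The lattice notation is only notation: neither connective is commutative. -/
class MCAlg (M : Type) extends Top M, Bot M, Compl M, Min M, Max M where
  und : M
  bot_def : (⊥ : M) = ⊤ᶜ
  or_def (x y : M) : x ⊔ y = (xᶜ ⊓ yᶜ)ᶜ
  top_and (x : M) : ⊤ ⊓ x = x
  and_abs (x y : M) : x ⊓ (x ⊔ y) = x
  mem (x y z : M) : (x ⊔ y) ⊓ z = (xᶜ ⊓ (y ⊓ z)) ⊔ (x ⊓ z)
  com (x y : M) : (x ⊓ y) ⊔ (y ⊓ x) = (y ⊓ x) ⊔ (x ⊓ y)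
  und_compl : undᶜ = und

/-! ### Short-circuit connectives in models of `CP_cl^U` -/

namespace CPAlg

variable {M : Type} [CPAlg M]

theorem cd_not (x y z : M) : cd x (cd F y T) z = cd z y x := by
  rw [cp4, cp2, cp1]

theorem contract_right (x y v w : M) : cd x y (cd v y w) = cd x y w := by
  simpa only [cp2] using cpmem x y x F v w

theorem contract_left (x y v w : M) : cd (cd x y v) y w = cd x y w := by
  rw [← cd_not, ← cd_not v y x, contract_right, cd_not]

theorem or_eq (x y : M) : cd T x y = cd F (cd (cd F y T) (cd F x T) F) T := by
  rw [cd_not, cp4, cp2, cd_not, cp3]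

theorem mem_eq (x y z : M) :
    cd z (cd T x y) F = cd T (cd (cd z y F) (cd F x T) F) (cd z x F) := by
  rw [cp4, cp1, cd_not, cp4, cp2, contract_left, cpmem, cp3]

theorem or_and_and (x y : M) : cd T (cd y x F) (cd x y F) = cd y x (cd x y F) := by
  rw [cp4, cp2, contract_right, cp3]

theorem com_eq (x y : M) :
    cd T (cd y x F) (cd x y F) = cd T (cd x y F) (cd y x F) := by
  have h1 : cd T x x = x := by
    calc cd T x x = cd T x (cd T x F) := by rw [cp3]
      _ = x := by rw [contract_right, cp3]
  -- after a false `y`, the then-branch of `x` is known to be false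
  have h2 : cd x y (cd F x F) = cd x y (cd y x F) := by
    rw [← cd_not F x F, ← cd_not F x y]
    calc cd x y (cd F (cd F x T) F) = cd x y (cd F (cd F x T) (cd T y F)) := by rw [cpmem]
      _ = cd x y (cd F (cd F x T) y) := by rw [cp3]
  rw [or_and_and, or_and_and, ← h2]
  calc cd y x (cd x y F) = cd (cd T y F) x (cd x y F) := by rw [cp3]
    _ = cd x y (cd F x F) := by rw [cl2, h1]

end CPAlg

/-! ### Consequences of `EqMSCL` up to associativity -/

namespace MCAlg

variable {M : Type} [MCAlg M]

theorem top_or (x : M) : ⊤ ⊔ x = ⊤ := by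
  rw [← top_and (⊤ ⊔ x), and_abs]

theorem compl_bot_and_compl (x : M) : (⊥ ⊓ xᶜ)ᶜ = ⊤ := by
  rw [bot_def, ← or_def, top_or]

theorem bot_and_or_self (x : M) : (⊥ ⊓ x) ⊔ x = x := by
  have h := mem ⊤ ⊤ x
  rw [top_or, ← bot_def, top_and] at h
  exact h.symm

theorem compl_compl_compl (x : M) : xᶜᶜᶜ = xᶜ := by
  have h := bot_and_or_self xᶜ
  rwa [or_def, compl_bot_and_compl, top_and] at h

/-- Every element is a disjunction, hence a negation, and triple negations collapse. -/
theorem not_not (x : M) : xᶜᶜ = x := by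
  rw [← bot_and_or_self x, or_def, compl_compl_compl]

theorem compl_or (x y : M) : (x ⊔ y)ᶜ = xᶜ ⊓ yᶜ := by rw [or_def, not_not]

theorem compl_and (x y : M) : (x ⊓ y)ᶜ = xᶜ ⊔ yᶜ := by rw [or_def, not_not, not_not]

theorem compl_bot : (⊥ : M)ᶜ = ⊤ := by rw [bot_def, not_not]

theorem compl_top : (⊤ : M)ᶜ = ⊥ := bot_def.symm

theorem compl_inj {x y : M} (h : xᶜ = yᶜ) : x = y := by
  rw [← not_not x, h, not_not]

theorem bot_and (x : M) : ⊥ ⊓ x = ⊥ := by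
  have h := compl_bot_and_compl xᶜ
  rw [not_not] at h
  rw [← not_not (⊥ ⊓ x), h, bot_def]

theorem bot_or (x : M) : ⊥ ⊔ x = x := by
  rw [or_def, compl_bot, top_and, not_not]

theorem or_abs (x y : M) : x ⊔ (x ⊓ y) = x := by
  apply compl_inj
  rw [compl_or, compl_and, and_abs]

theorem and_self (x : M) : x ⊓ x = x := by
  have h := and_abs x (x ⊓ x)
  rwa [or_abs] at h

theorem or_bot (x : M) : x ⊔ ⊥ = x := by
  have h := mem ⊥ x x
  rw [bot_or, and_self, compl_bot, top_and, bot_and] at h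
  exact h.symm

theorem and_top (x : M) : x ⊓ ⊤ = x := by
  apply compl_inj
  rw [compl_and, compl_top, or_bot]

theorem compl_and_or (x y : M) : (xᶜ ⊓ y) ⊔ x = x ⊔ y := by
  have h := mem x y ⊤
  rw [and_top, and_top, and_top] at h
  exact h.symm

theorem compl_and_and (x y : M) : (x ⊓ y)ᶜ ⊓ x = x ⊓ yᶜ := by
  apply compl_inj
  have h := compl_and_or xᶜ y
  rw [not_not] at h
  rw [compl_and (x ⊓ y)ᶜ x, compl_and x yᶜ, not_not, not_not, h]

theorem mem_compl (x y z : M) : (xᶜ ⊔ y) ⊓ z = (x ⊓ (y ⊓ z)) ⊔ (xᶜ ⊓ z) := by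
  rw [mem, not_not]

theorem mem_dual (x y z : M) : (x ⊓ y) ⊔ z = (xᶜ ⊔ (y ⊔ z)) ⊓ (x ⊔ z) := by
  apply compl_inj
  rw [compl_or, compl_and, mem]
  simp only [compl_and, compl_or]

theorem or_top_and (x y : M) : (x ⊔ ⊤) ⊓ y = (xᶜ ⊓ y) ⊔ (x ⊓ y) := by
  rw [mem, top_and]

theorem or_top_eq (x : M) : x ⊔ ⊤ = x ⊔ xᶜ := by
  have h := compl_and_or x xᶜ
  have h2 := or_top_and x ⊤
  rw [and_self] at h
  rwa [and_top, and_top, and_top, h] at h2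

theorem compl_or_self (x : M) : xᶜ ⊔ x = x ⊔ xᶜ := by
  have h := compl_and_or x xᶜ
  rwa [and_self] at h

theorem and_bot_eq (x : M) : x ⊓ ⊥ = x ⊓ xᶜ := by
  apply compl_inj
  rw [compl_and, compl_and, compl_bot, or_top_eq]

theorem compl_and_bot (x : M) : xᶜ ⊓ ⊥ = x ⊓ ⊥ := by
  rw [and_bot_eq, and_bot_eq]
  apply compl_inj
  simp only [compl_and, not_not, compl_or_self]

theorem and_bot_or_and (x y : M) : (x ⊓ ⊥) ⊔ (x ⊓ y) = x ⊓ y := by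
  have h := mem x ⊥ y
  rw [or_bot, bot_and, compl_and_bot] at h
  exact h.symm

theorem and_bot_and_bot (x : M) : (x ⊓ ⊥) ⊓ ⊥ = x ⊓ ⊥ := by
  have h : (x ⊔ ⊤) ⊓ ⊥ = (x ⊔ ⊥) ⊓ ⊥ := by rw [or_top_and, mem, bot_and]
  rw [or_bot, ← compl_and_bot, compl_or, compl_top, compl_and_bot x] at h
  exact h

/-- `x ⊓ ⊥` is never true, so it absorbs whatever follows it. -/
theorem and_bot_and (x y : M) : (x ⊓ ⊥) ⊓ y = x ⊓ ⊥ := by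
  have h := and_bot_or_and (x ⊓ ⊥) y
  rw [and_bot_and_bot, or_abs] at h
  exact h.symm

theorem compl_and_compl_and (x y : M) : xᶜ ⊓ (x ⊓ y)ᶜ = xᶜ := by
  rw [compl_and, and_abs]

theorem and_and_self_left (x y : M) : x ⊓ (x ⊓ y) = x ⊓ y := by
  apply compl_inj
  calc (x ⊓ (x ⊓ y))ᶜ = (x ⊓ (x ⊓ y)ᶜ) ⊔ xᶜ := by
        have h := compl_and_or xᶜ (x ⊓ y)ᶜ
        rw [not_not] at h
        rw [h, compl_and]
    _ = (xᶜ ⊔ ⊤) ⊓ (x ⊓ y)ᶜ := by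
        rw [or_top_and, not_not, compl_and_compl_and]
    _ = (x ⊓ y)ᶜ := by
        rw [← compl_bot, ← compl_and, ← compl_or, and_bot_or_and]

theorem and_compl_and (x y : M) : x ⊓ (x ⊓ y)ᶜ = x ⊓ yᶜ := by
  rw [← compl_and_and, and_and_self_left, compl_and_and]

theorem and_compl_or (x y : M) : x ⊓ (xᶜ ⊔ y) = x ⊓ y := by
  have h := and_compl_and x yᶜ
  rwa [compl_and, not_not] at h

theorem and_compl_and_self (x y : M) : x ⊓ (xᶜ ⊓ y) = x ⊓ ⊥ := by
  have h := compl_and_and x (x ⊔ yᶜ)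
  rw [and_abs, compl_or, not_not] at h
  rw [← h, ← compl_and_bot, and_bot_eq, not_not]

theorem and_and_or_and_bot (x y : M) : (x ⊓ (y ⊓ x)) ⊔ (x ⊓ ⊥) = x ⊓ y := by
  have h := compl_and_and x yᶜ
  rw [compl_and, not_not, mem_compl] at h
  rw [← h, ← compl_and_bot, and_bot_eq xᶜ, not_not]

theorem and_and_self_right (x y : M) : (x ⊓ y) ⊓ x = x ⊓ y := by
  rw [← and_and_or_and_bot, and_and_self_left, and_self, or_abs]

theorem and_or_and_bot (x y : M) : (x ⊓ y) ⊔ (x ⊓ ⊥) = x ⊓ y := by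
  have h := and_and_or_and_bot x (x ⊓ y)
  rwa [and_and_self_right, and_and_self_left] at h

theorem and_and_self_mid (x y : M) : x ⊓ (y ⊓ x) = x ⊓ y := by
  rw [← and_or_and_bot, and_and_or_and_bot]

theorem and_bot_or_and_right (x y z : M) :
    (x ⊓ ⊥) ⊔ (y ⊓ z) = ((x ⊓ ⊥) ⊔ y) ⊓ z := by
  rw [mem, and_bot_and, compl_and_or]

theorem or_and_or (x y z : M) : x ⊔ (y ⊓ (x ⊔ z)) = (x ⊔ y) ⊓ (x ⊔ z) := by
  rw [mem, and_abs, compl_and_or]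

theorem and_or_and (x y z : M) : x ⊓ (y ⊔ (x ⊓ z)) = (x ⊓ y) ⊔ (x ⊓ z) := by
  apply compl_inj
  simpa only [compl_and, compl_or] using or_and_or xᶜ yᶜ zᶜ

theorem and_or_and_self (x y z : M) : x ⊓ ((x ⊔ y) ⊓ z) = x ⊓ z := by
  rw [mem, and_or_and, and_compl_and_self, and_bot_or_and]

theorem and_or_or_self (x y z : M) : x ⊓ ((x ⊔ y) ⊔ z) = x := by
  rw [← and_or_and_self x y, and_abs, and_abs]

theorem or_and_and_self (x y z : M) : x ⊔ ((x ⊓ y) ⊓ z) = x := by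
  apply compl_inj
  rw [compl_or, compl_and, compl_and, and_or_or_self]

theorem and_bot_or (x y : M) : (x ⊓ ⊥) ⊔ y = (x ⊔ y) ⊓ (xᶜ ⊔ y) := by
  rw [← compl_and_bot, mem_dual, bot_or, not_not]

theorem and_and_and_self (x y z : M) : x ⊓ ((x ⊓ y) ⊓ z) = (x ⊓ y) ⊓ z := by
  rw [← and_compl_or]
  calc x ⊓ (xᶜ ⊔ ((x ⊓ y) ⊓ z))
      = (x ⊔ ((x ⊓ y) ⊓ z)) ⊓ (xᶜ ⊔ ((x ⊓ y) ⊓ z)) := by rw [or_and_and_self]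
    _ = (x ⊓ y) ⊓ z := by rw [← and_bot_or, and_bot_or_and_right, and_bot_or_and]

theorem compl_and_or_self (x y : M) : xᶜ ⊓ (y ⊔ x) = xᶜ ⊓ y := by
  have h : xᶜ ⊓ (yᶜ ⊓ xᶜ)ᶜ = xᶜ ⊓ yᶜᶜ := by
    rw [← and_compl_and, and_and_self_mid, and_compl_and]
  rwa [← or_def, not_not] at h

theorem and_compl_or_and (x y z : M) : x ⊓ ((xᶜ ⊔ y) ⊓ z) = x ⊓ (y ⊓ z) := by
  -- prefixing the disjunction by `x ⊔ zᶜ` cancels its second disjunct `xᶜ ⊓ z`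
  have h : (x ⊔ zᶜ) ⊓ ((x ⊓ (y ⊓ z)) ⊔ (xᶜ ⊓ z)) = (x ⊔ zᶜ) ⊓ (x ⊓ (y ⊓ z)) := by
    have := compl_and_or_self (xᶜ ⊓ z) (x ⊓ (y ⊓ z))
    rwa [compl_and, not_not] at this
  rw [mem_compl, ← and_or_and_self x zᶜ, h, and_or_and_self, and_and_self_left]

theorem and_assoc (x y z : M) : (x ⊓ y) ⊓ z = x ⊓ (y ⊓ z) := by
  rw [← and_and_and_self, ← and_compl_or_and x (x ⊓ y), ← and_compl_or_and x y]
  congr 2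
  -- `xᶜ ⊔ (x ⊓ y) = xᶜ ⊔ y`
  apply compl_inj
  rw [compl_or, compl_or, not_not, and_compl_and]

/-! ### Evaluation under an assumption, and case distinction -/

theorem and_compl_congr {a x x' : M} (h : a ⊓ x = a ⊓ x') : a ⊓ xᶜ = a ⊓ x'ᶜ := by
  rw [← and_compl_and, h, and_compl_and]

theorem and_and_congr {a x x' y y' : M} (hx : a ⊓ x = a ⊓ x') (hy : a ⊓ y = a ⊓ y') :
    a ⊓ (x ⊓ y) = a ⊓ (x' ⊓ y') := by
  have key (x y : M) : a ⊓ (x ⊓ y) = (a ⊓ x) ⊓ (a ⊓ y) := by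
    rw [← and_assoc, ← and_assoc (a ⊓ x), and_and_self_right]
  rw [key, hx, hy, ← key]

theorem and_or_congr {a x x' y y' : M} (hx : a ⊓ x = a ⊓ x') (hy : a ⊓ y = a ⊓ y') :
    a ⊓ (x ⊔ y) = a ⊓ (x' ⊔ y') := by
  rw [or_def, or_def]
  exact and_compl_congr (and_and_congr (and_compl_congr hx) (and_compl_congr hy))

/-- The conditional `x ◁ y ▷ z`. -/
def cnd (x y z : M) : M := (y ⊓ x) ⊔ (yᶜ ⊓ z)

theorem cnd_top (x y : M) : cnd x ⊤ y = x := by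
  rw [cnd, compl_top, top_and, bot_and, or_bot]

theorem cnd_bot (x y : M) : cnd x ⊥ y = y := by
  rw [cnd, compl_bot, top_and, bot_and, bot_or]

theorem and_cnd_congr {a x x' y y' z z' : M} (hx : a ⊓ x = a ⊓ x') (hy : a ⊓ y = a ⊓ y')
    (hz : a ⊓ z = a ⊓ z') : a ⊓ cnd x y z = a ⊓ cnd x' y' z' :=
  and_or_congr (and_and_congr hy hx) (and_and_congr (and_compl_congr hy) hz)

theorem and_cnd_self (x y z : M) : y ⊓ cnd x y z = y ⊓ x := by
  conv_rhs => rw [← cnd_top x z]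
  exact and_cnd_congr rfl (by rw [and_self, and_top]) rfl

theorem compl_and_cnd_self (x y z : M) : yᶜ ⊓ cnd x y z = yᶜ ⊓ z := by
  conv_rhs => rw [← cnd_bot x z]
  refine and_cnd_congr rfl ?_ rfl
  rw [compl_and_bot, ← compl_and_bot, and_bot_eq, not_not]

theorem cnd_congr {x x' y z z' : M} (hx : y ⊓ x = y ⊓ x') (hz : yᶜ ⊓ z = yᶜ ⊓ z') :
    cnd x y z = cnd x' y z' := by
  rw [cnd, cnd, hx, hz]

/-- The definedness of `x`: true where `x` is true or false, undefined where `x` is undefined. -/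
def D (x : M) : M := x ⊔ xᶜ

theorem compl_D (x : M) : (D x)ᶜ = x ⊓ ⊥ := by
  rw [D, ← or_top_eq, compl_or, compl_top, compl_and_bot]

theorem and_bot_or_eq (x y : M) : (x ⊓ ⊥) ⊔ y = D x ⊓ y := by
  have h : (x ⊓ ⊥) ⊔ ⊤ = D x := by
    apply compl_inj
    rw [compl_or, compl_top, compl_and_bot, and_bot_and, compl_D]
  have h2 := and_bot_or_and_right x ⊤ y
  rwa [top_and, h] at h2

theorem compl_D_and (x y : M) : (D x ⊓ y)ᶜ = D x ⊓ yᶜ := by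
  rw [compl_and, compl_D, and_bot_or_eq]

theorem D_and_self (x : M) : D x ⊓ x = x := by
  have h := and_bot_or_and x ⊤
  rwa [and_top, and_bot_or_eq] at h

theorem D_or (x y : M) : D x ⊔ y = D x := by
  apply compl_inj
  rw [compl_or, compl_D, and_bot_and]

/-- The only use of the axiom (Com). -/
theorem D_comm (x y : M) : D x ⊓ D y = D y ⊓ D x := by
  have h (x y z : M) : (D x ⊓ D y) ⊔ z = D x ⊓ D y := by
    have hcut := compl_and_and (D x) (D y)ᶜ
    rw [compl_and, not_not] at hcut
    rw [mem_dual, D_or, D_or, hcut]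
  have h2 := com (D x) (D y)
  rwa [h, h] at h2

/-- If `D a ⊓ x = x`, then `x` is undefined wherever `a` is. This persists under all operations
that evaluate `x` first. -/
theorem D_compl {a x : M} (h : D a ⊓ x = x) : D a ⊓ xᶜ = xᶜ := by
  rw [← compl_D_and, h]

theorem D_and {a x : M} (h : D a ⊓ x = x) (y : M) : D a ⊓ (x ⊓ y) = x ⊓ y := by
  rw [← and_assoc, h]

theorem D_or_of {a x : M} (h : D a ⊓ x = x) (y : M) : D a ⊓ (x ⊔ y) = x ⊔ y := by
  rw [or_def]
  exact D_compl (D_and (D_compl h) _)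

theorem D_cnd {a y : M} (h : D a ⊓ y = y) (x z : M) : D a ⊓ cnd x y z = cnd x y z :=
  D_or_of (D_and h x) _

theorem eq_of_cases {a x y : M} (hx : D a ⊓ x = x) (hy : D a ⊓ y = y) (h : a ⊓ x = a ⊓ y)
    (hneg : aᶜ ⊓ x = aᶜ ⊓ y) : x = y := by
  rw [← hx, ← hy, D, mem, mem, h, hneg]

/-! ### The axioms of `CP_cl^U` in models of `EqCL^U` -/

theorem cnd_cp4 (x y z u v : M) : cnd x (cnd y z u) v = cnd (cnd x y v) z (cnd x u v) := by
  refine eq_of_cases (a := z) (D_cnd (D_cnd (D_and_self z) _ _) _ _)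
    (D_cnd (D_and_self z) _ _) ?_ ?_
  · rw [and_cnd_self]
    exact and_cnd_congr rfl (and_cnd_self ..) rfl
  · rw [compl_and_cnd_self]
    exact and_cnd_congr rfl (compl_and_cnd_self ..) rfl

theorem cnd_cpmem (x y z u v w : M) :
    cnd x y (cnd z u (cnd v y w)) = cnd x y (cnd z u w) :=
  cnd_congr rfl (and_cnd_congr rfl rfl (compl_and_cnd_self ..))

theorem cnd_cl2 (x y z u v w : M) :
    cnd (cnd x y z) u (cnd v y w) = cnd (cnd x u v) y (cnd z u w) := by
  have hu (p q : M) : D u ⊓ cnd p u q = cnd p u q := D_cnd (D_and_self u) p q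
  have hy (p q : M) : D y ⊓ cnd p y q = cnd p y q := D_cnd (D_and_self y) p q
  have hR : D u ⊓ cnd (cnd x u v) y (cnd z u w) = cnd (cnd x u v) y (cnd z u w) := by
    refine eq_of_cases (a := y) ?_ (hy _ _) ?_ ?_
    · conv_rhs => rw [← hy]
      rw [← and_assoc, ← and_assoc, D_comm]
    · rw [and_cnd_self, and_and_congr rfl (and_cnd_self ..), hu]
    · rw [compl_and_cnd_self, and_and_congr rfl (compl_and_cnd_self ..), hu]
  refine eq_of_cases (hu _ _) hR ?_ ?_
  · rw [and_cnd_self]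
    exact and_cnd_congr (and_cnd_self ..).symm rfl (and_cnd_self ..).symm
  · rw [compl_and_cnd_self]
    exact and_cnd_congr (compl_and_cnd_self ..).symm rfl (compl_and_cnd_self ..).symm

theorem und_and (x : M) : und ⊓ x = und := by
  have h : (und : M) ⊓ ⊥ = und := by rw [and_bot_eq, und_compl, and_self]
  have h2 := and_bot_and und x
  rwa [h] at h2

theorem cnd_cpu (x y : M) : cnd x und y = und := by
  rw [cnd, und_compl, und_and, und_and, or_def, und_compl, and_self, und_compl]

theorem cnd_not (x : M) : cnd ⊥ x ⊤ = xᶜ := by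
  rw [cnd, ← compl_and_bot, and_bot_or_and, and_top]

theorem cnd_and (x y : M) : cnd y x ⊥ = x ⊓ y := by
  rw [cnd, compl_and_bot, and_or_and_bot]

theorem cnd_or (x y : M) : cnd ⊤ x y = x ⊔ y := by
  apply compl_inj
  rw [cnd, and_top, compl_or, compl_or, compl_and, and_compl_or]

theorem cnd_cp3 (x : M) : cnd ⊤ x ⊥ = x := by
  rw [cnd_and, and_top]

end MCAlg

/-! ### Lindenbaum algebras and the equivalence -/

instance DerClU.setoid (A : Type) : Setoid (ExprU A) :=
  ⟨DerClU, .refl, .symm, .trans⟩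

instance DerEqCLU.setoid (A : Type) : Setoid (STermU A) :=
  ⟨DerEqCLU, .refl, .symm, .trans⟩

/-- The Lindenbaum algebra of `CP_cl^U`. -/
instance DerClU.alg (A : Type) : CPAlg (Quotient (DerClU.setoid A)) where
  T := ⟦.T⟧
  F := ⟦.F⟧
  U := ⟦.U⟧
  cd x y z := Quotient.liftOn₂ x y (fun x y => Quotient.map (ExprU.cond x y)
      (fun _ _ h => .congr (.refl x) (.refl y) h) z)
    (fun _ _ _ _ hx hy => Quotient.inductionOn z fun z => Quotient.sound (.congr hx hy (.refl z)))
  cp1 := by rintro ⟨x⟩ ⟨y⟩; exact Quotient.sound (.cp1 ..)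
  cp2 := by rintro ⟨x⟩ ⟨y⟩; exact Quotient.sound (.cp2 ..)
  cp3 := by rintro ⟨x⟩; exact Quotient.sound (.cp3 ..)
  cp4 := by rintro ⟨x⟩ ⟨y⟩ ⟨z⟩ ⟨u⟩ ⟨v⟩; exact Quotient.sound (.cp4 ..)
  cpmem := by rintro ⟨x⟩ ⟨y⟩ ⟨z⟩ ⟨u⟩ ⟨v⟩ ⟨w⟩; exact Quotient.sound (.cpmem ..)
  cl2 := by rintro ⟨x⟩ ⟨y⟩ ⟨z⟩ ⟨u⟩ ⟨v⟩ ⟨w⟩; exact Quotient.sound (.cl2 ..)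
  cpu := by rintro ⟨x⟩ ⟨y⟩; exact Quotient.sound (.cpu ..)

/-- The Lindenbaum algebra of `EqCL^U`. -/
instance DerEqCLU.alg (A : Type) : MCAlg (Quotient (DerEqCLU.setoid A)) where
  top := ⟦.T⟧
  bot := ⟦.F⟧
  und := ⟦.U⟧
  compl := Quotient.map .neg fun _ _ h => .negCongr h
  min := Quotient.map₂ .and fun _ _ h _ _ h' => .andCongr h h'
  max := Quotient.map₂ .or fun _ _ h _ _ h' => .orCongr h h'
  bot_def := Quotient.sound .negAx
  or_def := by rintro ⟨x⟩ ⟨y⟩; exact Quotient.sound (.orAx ..)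
  top_and := by rintro ⟨x⟩; exact Quotient.sound (.tand ..)
  and_abs := by rintro ⟨x⟩ ⟨y⟩; exact Quotient.sound (.abs ..)
  mem := by rintro ⟨x⟩ ⟨y⟩ ⟨z⟩; exact Quotient.sound (.mem ..)
  com := by rintro ⟨x⟩ ⟨y⟩; exact Quotient.sound (.com ..)
  und_compl := Quotient.sound .und

/-- The value of a conditional expression in a model of `CP_cl^U`. -/
def ExprU.eval {A M : Type} [CPAlg M] (v : A → M) : ExprU A → M
  | .T => CPAlg.T
  | .F => CPAlg.F
  | .U => CPAlg.U
  | .atom a => v a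
  | .cond x y z => CPAlg.cd (x.eval v) (y.eval v) (z.eval v)

/-- The value of a short-circuit term in a model of `EqCL^U`. -/
def STermU.eval {A M : Type} [MCAlg M] (v : A → M) : STermU A → M
  | .T => ⊤
  | .F => ⊥
  | .U => MCAlg.und
  | .atom a => v a
  | .neg s => (s.eval v)ᶜ
  | .and s t => s.eval v ⊓ t.eval v
  | .or s t => s.eval v ⊔ t.eval v

theorem DerClU.eval_eq {A M : Type} [CPAlg M] (v : A → M) {P Q : ExprU A} (h : DerClU P Q) :
    P.eval v = Q.eval v := by
  induction h with
  | refl => rfl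
  | symm _ ih => exact ih.symm
  | trans _ _ ih₁ ih₂ => exact ih₁.trans ih₂
  | congr _ _ _ ih₁ ih₂ ih₃ => simp only [ExprU.eval, ih₁, ih₂, ih₃]
  | cp1 => exact CPAlg.cp1 ..
  | cp2 => exact CPAlg.cp2 ..
  | cp3 => exact CPAlg.cp3 ..
  | cp4 => exact CPAlg.cp4 ..
  | cpmem => exact CPAlg.cpmem ..
  | cl2 => exact CPAlg.cl2 ..
  | cpu => exact CPAlg.cpu ..

theorem DerEqCLU.eval_eq {A M : Type} [MCAlg M] (v : A → M) {s t : STermU A}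
    (h : DerEqCLU s t) : s.eval v = t.eval v := by
  induction h with
  | refl => rfl
  | symm _ ih => exact ih.symm
  | trans _ _ ih₁ ih₂ => exact ih₁.trans ih₂
  | negCongr _ ih => simp only [STermU.eval, ih]
  | andCongr _ _ ih₁ ih₂ => simp only [STermU.eval, ih₁, ih₂]
  | orCongr _ _ ih₁ ih₂ => simp only [STermU.eval, ih₁, ih₂]
  | negAx => exact MCAlg.bot_def
  | orAx => exact MCAlg.or_def ..
  | tand => exact MCAlg.top_and ..
  | abs => exact MCAlg.and_abs ..
  | mem => exact MCAlg.mem ..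
  | com => exact MCAlg.com ..
  | und => exact MCAlg.und_compl

/-- The short-circuit connectives definable in a model of `CP_cl^U`. -/
@[reducible] def CPAlg.toMCAlg (M : Type) [CPAlg M] : MCAlg M where
  top := T
  bot := F
  und := U
  compl x := cd F x T
  min x y := cd y x F
  max x y := cd T x y
  bot_def := (cp1 F T).symm
  or_def := or_eq
  top_and x := cp1 x F
  and_abs x y := by
    rw [contract_left, cp3]
  mem := mem_eq
  com := com_eq
  und_compl := cpu F T

/-- The conditional definable in a model of `EqCL^U`. -/
@[reducible] def MCAlg.toCPAlg (M : Type) [MCAlg M] : CPAlg M where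
  T := ⊤
  F := ⊥
  U := und
  cd := cnd
  cp1 := cnd_top
  cp2 := cnd_bot
  cp3 := cnd_cp3
  cp4 := cnd_cp4
  cpmem := cnd_cpmem
  cl2 := cnd_cl2
  cpu := cnd_cpu

/-- Evaluating a term in the Lindenbaum algebra of `CP_cl^U` yields the class of its translation. -/
theorem eval_toMCAlg {A : Type} (s : STermU A) :
    @STermU.eval A _ (CPAlg.toMCAlg (Quotient (DerClU.setoid A))) (fun a => ⟦.atom a⟧) s
      = ⟦sclToCondU s⟧ := by
  induction s with
  | T | F | U | atom a => rfl
  | neg s ih => exact congrArg (fun q : Quotient (DerClU.setoid A) => CPAlg.cd CPAlg.F q CPAlg.T) ih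
  | and s t ihs iht =>
    exact congrArg₂ (fun p q : Quotient (DerClU.setoid A) => CPAlg.cd q p CPAlg.F) ihs iht
  | or s t ihs iht =>
    exact congrArg₂ (fun p q : Quotient (DerClU.setoid A) => CPAlg.cd CPAlg.T p q) ihs iht

/-- Evaluating the translation of a term in the Lindenbaum algebra of `EqCL^U` yields the class of
the term itself. -/
theorem eval_toCPAlg {A : Type} (s : STermU A) :
    @ExprU.eval A _ (MCAlg.toCPAlg (Quotient (DerEqCLU.setoid A))) (fun a => ⟦.atom a⟧)
      (sclToCondU s) = ⟦s⟧ := by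
  induction s with
  | T | F | U | atom a => rfl
  | neg s ih => simp only [sclToCondU, ExprU.eval, ih]; exact MCAlg.cnd_not _
  | and s t ihs iht => simp only [sclToCondU, ExprU.eval, ihs, iht]; exact MCAlg.cnd_and _ _
  | or s t ihs iht => simp only [sclToCondU, ExprU.eval, ihs, iht]; exact MCAlg.cnd_or _ _

/-- For all three-valued SCL terms s and t over A:
EqCL^U ⊢ s = t iff CP_cl^U ⊢ f(s) = f(t). -/
theorem stmt_12 {A : Type} (s t : STermU A) :
    DerEqCLU s t ↔ DerClU (sclToCondU s) (sclToCondU t) := by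
  constructor
  · intro h
    have := @DerEqCLU.eval_eq A _ (CPAlg.toMCAlg (Quotient (DerClU.setoid A)))
      (fun a => ⟦.atom a⟧) s t h
    rw [eval_toMCAlg, eval_toMCAlg] at this
    exact Quotient.exact this
  · intro h
    have := @DerClU.eval_eq A _ (MCAlg.toCPAlg (Quotient (DerEqCLU.setoid A)))
      (fun a => ⟦.atom a⟧) _ _ h
    rw [eval_toCPAlg, eval_toCPAlg] at this
    exact Quotient.exact this
end

section
/- Let M be a set with a unary operation ' and binary operations ∧ and ∨ satisfying, for all elements, (1.1a) x'' = x, (1.1b) (x ∧ y)' = x' ∨ y', (1.1d) x ∧ (y ∨ z) = (x ∧ y) ∨ (x ∧ z), (Mem2) (x ∨ y) ∧ z = (x ∧ z) ∨ ((x' ∧ y) ∧ z), (1.1f) x ∨ (x ∧ y) = x, and (1.1g) (x ∧ y) ∨ (y ∧ x) = (y ∧ x) ∨ (x ∧ y). Then M also satisfies the associative law (1.1c) (x ∧ y) ∧ z = x ∧ (y ∧ z) for all elements. (Hence these six axioms completely axiomatise conditional logic with no distinguished constants.) -/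
/-!
Write `∼`, `⋏`, `⋎` for the three operations. Negation is an involution exchanging `⋏` and `⋎`, so
each of the six axioms implies its dual and every derived identity may be dualised
(`CondLogic.dual`). The argument then has three parts.

* *Left memory.* A conjunct to the right of `x` is only evaluated when `x` holds, so there any
  further outermost evaluation of `x` may be inserted or deleted: `(x ⋏ y) ⋏ x = x ⋏ y`,
  `x ⋏ (∼x ⋎ y) = x ⋏ y`, `x ⋏ (x ⋏ y) = x ⋏ y` and `x ⋏ ((x ⋏ y) ⋏ z) = x ⋏ (y ⋏ z)`. Of these,
  `(x ⋏ y) ⋏ x = x ⋏ y` is the hardest to reach without associativity. The symmetry axiom enters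
  twice, through `((x ⋏ y) ⋎ x) ⋏ x = (x ⋏ (x ⋏ y)) ⋎ x` and through `∼x ⋏ x = x ⋏ ∼x`.
* *Repeated right factors.* These identities give `(x ⋏ y) ⋏ (y ⋏ z) = (x ⋏ y) ⋏ z`, hence
  `(x ⋏ (y ⋏ z)) ⋏ z = x ⋏ (y ⋏ z)`, and also `(x ⋎ (y ⋏ z)) ⋏ z = (x ⋎ y) ⋏ z`.
* *Associativity.* Both bracketings are compared with the conditional form
  `(x ⋏ y) ⋏ z = (∼x ⋎ y) ⋏ (x ⋏ z)` (`CondLogic.inf_inf_eq`). In its right-hand side `y` can be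
  replaced by `y ⋏ (x ⋏ z)`, and reading the form backwards turns the result into
  `(x ⋏ (y ⋏ (x ⋏ z))) ⋏ z`, which the memory identities reduce to `x ⋏ (y ⋏ z)`.
-/

/-- Conditional logic without constants, with associativity removed: `neg` is negation, and
`wedge` and `vee` are the left-sequential conjunction and disjunction. The bracketing of the triple
conjunction in `sup_inf` matters here. -/
structure CondLogic {M : Type*} (neg : M → M) (wedge vee : M → M → M) : Prop where
  neg_neg : ∀ x, neg (neg x) = x
  neg_inf : ∀ x y, neg (wedge x y) = vee (neg x) (neg y)
  inf_sup : ∀ x y z, wedge x (vee y z) = vee (wedge x y) (wedge x z)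
  sup_inf : ∀ x y z, wedge (vee x y) z = vee (wedge x z) (wedge (wedge (neg x) y) z)
  sup_absorb : ∀ x y, vee x (wedge x y) = x
  symm : ∀ x y, vee (wedge x y) (wedge y x) = vee (wedge y x) (wedge x y)

namespace CondLogic

variable {M : Type*} {neg : M → M} {wedge vee : M → M → M}

local prefix:max "∼" => neg
local infixl:70 "⋏" => wedge
local infixl:65 "⋎" => vee

theorem neg_sup (h : CondLogic neg wedge vee) (x y : M) : ∼(x ⋎ y) = ∼x ⋏ ∼y := by
  rw [← h.neg_neg (∼x ⋏ ∼y), h.neg_inf, h.neg_neg, h.neg_neg]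

/-- The axioms are self-dual: conjunction and disjunction may be exchanged. -/
theorem dual (h : CondLogic neg wedge vee) : CondLogic neg vee wedge where
  neg_neg := h.neg_neg
  neg_inf := h.neg_sup
  inf_sup x y z := by
    have := congrArg neg (h.inf_sup (∼x) (∼y) (∼z))
    simpa only [h.neg_inf, h.neg_sup, h.neg_neg] using this
  sup_inf x y z := by
    have := congrArg neg (h.sup_inf (∼x) (∼y) (∼z))
    simpa only [h.neg_inf, h.neg_sup, h.neg_neg] using this
  sup_absorb x y := by
    have := congrArg neg (h.sup_absorb (∼x) (∼y))
    simpa only [h.neg_inf, h.neg_sup, h.neg_neg] using this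
  symm x y := by
    have := congrArg neg (h.symm (∼x) (∼y))
    simpa only [h.neg_inf, h.neg_sup, h.neg_neg] using this

theorem inf_absorb (h : CondLogic neg wedge vee) (x y : M) : x ⋏ (x ⋎ y) = x :=
  h.dual.sup_absorb x y

theorem sup_inf_distrib (h : CondLogic neg wedge vee) (x y z : M) :
    x ⋎ (y ⋏ z) = (x ⋎ y) ⋏ (x ⋎ z) :=
  h.dual.inf_sup x y z

theorem inf_sup_memory (h : CondLogic neg wedge vee) (x y z : M) :
    (x ⋏ y) ⋎ z = (x ⋎ z) ⋏ ((∼x ⋎ y) ⋎ z) :=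
  h.dual.sup_inf x y z

theorem neg_sup_inf (h : CondLogic neg wedge vee) (x y z : M) :
    (∼x ⋎ y) ⋏ z = (∼x ⋏ z) ⋎ ((x ⋏ y) ⋏ z) := by
  rw [h.sup_inf, h.neg_neg]

theorem inf_self (h : CondLogic neg wedge vee) (x : M) : x ⋏ x = x := by
  have := h.inf_absorb x (x ⋏ x)
  rwa [h.sup_absorb] at this

theorem sup_self (h : CondLogic neg wedge vee) (x : M) : x ⋎ x = x :=
  h.dual.inf_self x

/-! ### Left memory -/

theorem sup_neg_inf (h : CondLogic neg wedge vee) (x z : M) :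
    (x ⋎ ∼x) ⋏ z = (x ⋏ z) ⋎ (∼x ⋏ z) := by
  rw [h.sup_inf, h.inf_self]

theorem sup_neg_sup_inf (h : CondLogic neg wedge vee) (x y z : M) :
    (x ⋎ (∼x ⋎ y)) ⋏ z = (x ⋎ ∼x) ⋏ z := by
  rw [h.sup_inf, h.inf_absorb, h.sup_neg_inf]

theorem sup_neg_sup (h : CondLogic neg wedge vee) (x y : M) : x ⋎ (∼x ⋎ y) = x ⋎ ∼x :=
  calc x ⋎ (∼x ⋎ y) = (x ⋎ (∼x ⋎ y)) ⋏ (x ⋎ (∼x ⋎ y)) := (h.inf_self _).symm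
    _ = (x ⋎ ∼x) ⋏ (x ⋎ (∼x ⋎ y)) := h.sup_neg_sup_inf x y _
    _ = x ⋎ (∼x ⋏ (∼x ⋎ y)) := (h.sup_inf_distrib _ _ _).symm
    _ = x ⋎ ∼x := by rw [h.inf_absorb]

theorem inf_neg_inf (h : CondLogic neg wedge vee) (x y : M) : x ⋏ (∼x ⋏ y) = x ⋏ ∼x :=
  h.dual.sup_neg_sup x y

theorem sup_neg_sup_inf' (h : CondLogic neg wedge vee) (x y z : M) :
    x ⋎ ((∼x ⋎ y) ⋏ z) = x ⋎ (∼x ⋏ z) := by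
  rw [h.sup_inf_distrib, h.sup_neg_sup, ← h.sup_inf_distrib]

theorem inf_sup_right (h : CondLogic neg wedge vee) (x y : M) :
    x ⋏ (y ⋎ x) = (x ⋏ y) ⋎ x := by
  rw [h.inf_sup, h.inf_self]

theorem sup_inf_left (h : CondLogic neg wedge vee) (x y : M) :
    (x ⋎ y) ⋏ x = x ⋎ (y ⋏ x) :=
  (h.dual.inf_sup_right x y).symm

theorem sup_neg_inf_inf_self (h : CondLogic neg wedge vee) (x y : M) :
    x ⋎ ((∼x ⋏ y) ⋏ x) = x ⋎ (y ⋏ x) := by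
  rw [← h.sup_inf_left x y, h.sup_inf, h.inf_self]

theorem sup_neg_inf_sup (h : CondLogic neg wedge vee) (x y : M) :
    x ⋎ (∼x ⋏ (x ⋎ y)) = x ⋎ (∼x ⋏ y) := by
  rw [h.sup_inf_distrib x (∼x) y, h.sup_neg_inf, h.inf_absorb]

theorem sup_sup_inf_self (h : CondLogic neg wedge vee) (x y : M) :
    x ⋎ (x ⋎ (y ⋏ x)) = x ⋎ (y ⋏ x) :=
  calc x ⋎ (x ⋎ (y ⋏ x)) = x ⋎ ((x ⋎ y) ⋏ x) := by rw [h.sup_inf_left]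
    _ = x ⋎ ((∼x ⋏ (x ⋎ y)) ⋏ x) := (h.sup_neg_inf_inf_self _ _).symm
    _ = (x ⋎ (∼x ⋏ (x ⋎ y))) ⋏ x := (h.sup_inf_left _ _).symm
    _ = (x ⋎ (∼x ⋏ y)) ⋏ x := by rw [h.sup_neg_inf_sup]
    _ = x ⋎ ((∼x ⋏ y) ⋏ x) := h.sup_inf_left _ _
    _ = x ⋎ (y ⋏ x) := h.sup_neg_inf_inf_self _ _

theorem inf_inf_sup_self (h : CondLogic neg wedge vee) (x y : M) :
    (x ⋏ (x ⋏ y)) ⋎ x = (x ⋏ y) ⋎ x := by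
  rw [← h.inf_sup_right, ← h.inf_sup_right, h.dual.sup_sup_inf_self]

/-- First use of the symmetry axiom, in its dual form: it exchanges the factors of
`((x ⋏ y) ⋎ x) ⋏ (x ⋎ (x ⋏ y))`, whose second factor is `x`. -/
theorem inf_sup_self_inf_self (h : CondLogic neg wedge vee) (x y : M) :
    ((x ⋏ y) ⋎ x) ⋏ x = (x ⋏ y) ⋎ x :=
  calc ((x ⋏ y) ⋎ x) ⋏ x = ((x ⋏ y) ⋎ x) ⋏ (x ⋎ (x ⋏ y)) := by rw [h.sup_absorb]
    _ = (x ⋎ (x ⋏ y)) ⋏ ((x ⋏ y) ⋎ x) := h.dual.symm _ _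
    _ = x ⋏ ((x ⋏ y) ⋎ x) := by rw [h.sup_absorb]
    _ = (x ⋏ (x ⋏ y)) ⋎ x := h.inf_sup_right _ _
    _ = (x ⋏ y) ⋎ x := h.inf_inf_sup_self x y

theorem inf_neg_sup_sup_self (h : CondLogic neg wedge vee) (x y : M) :
    (x ⋏ (∼x ⋎ y)) ⋎ x = (x ⋏ y) ⋎ x := by
  rw [h.inf_sup_memory x y x, h.sup_self, h.inf_sup_right]

theorem sup_inf_neg_sup (h : CondLogic neg wedge vee) (x y : M) :
    (x ⋎ y) ⋏ (∼x ⋎ y) = (x ⋏ ∼x) ⋎ y := by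
  rw [h.inf_sup_memory, h.sup_self]

theorem inf_neg_sup_inf (h : CondLogic neg wedge vee) (x y : M) :
    x ⋏ (∼x ⋎ (x ⋏ y)) = x ⋏ (∼x ⋎ y) := by
  have := h.sup_inf_neg_sup x (x ⋏ y)
  rwa [h.sup_absorb, ← h.inf_sup] at this

theorem inf_sup_inf_sup_self (h : CondLogic neg wedge vee) (x y z : M) :
    (x ⋏ ((x ⋎ y) ⋏ z)) ⋎ x = (x ⋏ z) ⋎ x := by
  have key : ∼x ⋎ ((x ⋎ y) ⋏ z) = ∼x ⋎ (x ⋏ z) := by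
    simpa only [h.neg_neg] using h.sup_neg_sup_inf' (∼x) y z
  rw [← h.inf_neg_sup_sup_self, key, h.inf_neg_sup_inf, h.inf_neg_sup_sup_self]

theorem inf_inf_self (h : CondLogic neg wedge vee) (x y : M) : (x ⋏ y) ⋏ x = x ⋏ y :=
  calc (x ⋏ y) ⋏ x = (x ⋏ y) ⋏ (x ⋎ (x ⋏ y)) := by rw [h.sup_absorb]
    _ = ((x ⋏ y) ⋏ x) ⋎ (x ⋏ y) := h.inf_sup_right _ _
    _ = ((x ⋏ y) ⋏ (((x ⋏ y) ⋎ x) ⋏ x)) ⋎ (x ⋏ y) := (h.inf_sup_inf_sup_self _ _ _).symm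
    _ = ((x ⋏ y) ⋏ ((x ⋏ y) ⋎ x)) ⋎ (x ⋏ y) := by rw [h.inf_sup_self_inf_self]
    _ = x ⋏ y := by rw [h.inf_absorb, h.sup_self]

theorem inf_neg_sup_neg_inf (h : CondLogic neg wedge vee) (x : M) :
    (x ⋏ ∼x) ⋎ (∼x ⋏ x) = x ⋏ ∼x := by
  have := h.sup_inf x x (∼x)
  rwa [h.sup_self, h.inf_inf_self, eq_comm] at this

/-- Second use of the symmetry axiom: each of `x ⋏ ∼x` and `∼x ⋏ x` absorbs the other. -/
theorem neg_inf_self (h : CondLogic neg wedge vee) (x : M) : ∼x ⋏ x = x ⋏ ∼x := by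
  have := h.inf_neg_sup_neg_inf (∼x)
  rw [h.neg_neg] at this
  rw [← this, ← h.symm, h.inf_neg_sup_neg_inf]

theorem neg_sup_self (h : CondLogic neg wedge vee) (x : M) : ∼x ⋎ x = x ⋎ ∼x :=
  h.dual.neg_inf_self x

theorem neg_sup_sup (h : CondLogic neg wedge vee) (x y : M) : ∼x ⋎ (x ⋎ y) = ∼x ⋎ x := by
  simpa only [h.neg_neg] using h.sup_neg_sup (∼x) y

theorem neg_sup_inf_sup (h : CondLogic neg wedge vee) (x y : M) :
    (∼x ⋎ y) ⋏ (x ⋎ y) = (x ⋏ ∼x) ⋎ y := by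
  have := h.sup_inf_neg_sup (∼x) y
  rwa [h.neg_neg, h.neg_inf_self] at this

theorem inf_neg_sup_sup (h : CondLogic neg wedge vee) (x y : M) :
    (x ⋏ ∼x) ⋎ (x ⋎ y) = x ⋎ (∼x ⋏ y) :=
  calc (x ⋏ ∼x) ⋎ (x ⋎ y) = (∼x ⋎ (x ⋎ y)) ⋏ (x ⋎ (x ⋎ y)) := (h.neg_sup_inf_sup _ _).symm
    _ = (x ⋎ ∼x) ⋏ (x ⋎ (x ⋎ y)) := by rw [h.neg_sup_sup, h.neg_sup_self]
    _ = x ⋎ (∼x ⋏ (x ⋎ y)) := (h.sup_inf_distrib _ _ _).symm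
    _ = x ⋎ (∼x ⋏ y) := h.sup_neg_inf_sup x y

theorem sup_inf_sup_inf (h : CondLogic neg wedge vee) (x y z : M) :
    ((x ⋎ y) ⋏ z) ⋎ (x ⋏ z) = (x ⋎ y) ⋏ z := by
  rw [h.sup_inf, h.dual.inf_inf_self]

theorem inf_neg_sup_sup_inf (h : CondLogic neg wedge vee) (x y z : M) :
    x ⋏ ((∼x ⋎ y) ⋎ (x ⋏ z)) = x ⋏ (y ⋎ z) := by
  have := h.inf_sup_memory x y (x ⋏ z)
  rw [h.sup_absorb, ← h.inf_sup] at this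
  exact this.symm

theorem inf_neg_sup (h : CondLogic neg wedge vee) (x y : M) : x ⋏ (∼x ⋎ y) = x ⋏ y := by
  have key : (x ⋎ ∼x) ⋏ (x ⋏ y) = x ⋏ (∼x ⋎ y) := h.dual.inf_neg_sup_sup x y
  calc x ⋏ (∼x ⋎ y) = (x ⋎ ∼x) ⋏ (x ⋏ y) := key.symm
    _ = ((x ⋎ ∼x) ⋏ (x ⋏ y)) ⋎ (x ⋏ (x ⋏ y)) := (h.sup_inf_sup_inf _ _ _).symm
    _ = (x ⋏ (∼x ⋎ y)) ⋎ (x ⋏ (x ⋏ y)) := by rw [key]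
    _ = x ⋏ ((∼x ⋎ y) ⋎ (x ⋏ y)) := (h.inf_sup _ _ _).symm
    _ = x ⋏ (y ⋎ y) := h.inf_neg_sup_sup_inf x y y
    _ = x ⋏ y := by rw [h.sup_self]

theorem sup_neg_inf_right (h : CondLogic neg wedge vee) (x y : M) : x ⋎ (∼x ⋏ y) = x ⋎ y :=
  h.dual.inf_neg_sup x y

theorem inf_left_idem (h : CondLogic neg wedge vee) (x y : M) : x ⋏ (x ⋏ y) = x ⋏ y := by
  rw [← h.inf_neg_sup x (x ⋏ y), h.inf_neg_sup_inf, h.inf_neg_sup]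

theorem sup_sup_sup (h : CondLogic neg wedge vee) (x y z : M) :
    x ⋎ ((x ⋎ y) ⋎ z) = x ⋎ (y ⋎ z) := by
  have key : ∼x ⋏ (x ⋎ y) = ∼x ⋏ y := by
    simpa only [h.neg_neg] using h.inf_neg_sup (∼x) y
  rw [← h.sup_neg_inf_right x ((x ⋎ y) ⋎ z), h.inf_sup, key, ← h.inf_sup, h.sup_neg_inf_right]

theorem inf_inf_inf (h : CondLogic neg wedge vee) (x y z : M) :
    x ⋏ ((x ⋏ y) ⋏ z) = x ⋏ (y ⋏ z) :=
  h.dual.sup_sup_sup x y z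

theorem inf_inf_inf_left (h : CondLogic neg wedge vee) (x y z : M) :
    (x ⋏ y) ⋏ (x ⋏ z) = (x ⋏ y) ⋏ z := by
  rw [← h.inf_inf_inf (x ⋏ y) x z, h.inf_inf_self, h.inf_left_idem]

theorem inf_inf_inf_left' (h : CondLogic neg wedge vee) (x y z : M) :
    x ⋏ (y ⋏ (x ⋏ z)) = x ⋏ (y ⋏ z) := by
  rw [← h.inf_inf_inf, h.inf_inf_inf_left, h.inf_inf_inf]

/-! ### Repeated right factors -/

theorem inf_right_idem (h : CondLogic neg wedge vee) (x y : M) : (x ⋏ y) ⋏ y = x ⋏ y := by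
  rw [← h.inf_inf_inf_left, h.inf_self]

theorem inf_inf_inf_middle (h : CondLogic neg wedge vee) (x y z : M) :
    (x ⋏ y) ⋏ (y ⋏ z) = (x ⋏ y) ⋏ z := by
  rw [← h.inf_inf_inf (x ⋏ y) y z, h.inf_right_idem, h.inf_left_idem]

theorem inf_inf_right_idem (h : CondLogic neg wedge vee) (x y z : M) :
    (x ⋏ (y ⋏ z)) ⋏ z = x ⋏ (y ⋏ z) := by
  rw [← h.inf_inf_inf_middle, h.inf_right_idem, h.inf_right_idem]

theorem sup_neg_inf_inf (h : CondLogic neg wedge vee) (x y z : M) :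
    x ⋎ ((∼x ⋏ y) ⋏ z) = x ⋎ (y ⋏ z) := by
  rw [h.sup_inf_distrib, h.sup_neg_inf_right, ← h.sup_inf_distrib]

theorem sup_inf_inf_sup (h : CondLogic neg wedge vee) (x y z : M) :
    (x ⋎ y) ⋏ ((x ⋏ z) ⋎ y) = (x ⋏ z) ⋎ y := by
  rw [h.inf_sup_memory, h.inf_left_idem]

theorem sup_inf_inf_right (h : CondLogic neg wedge vee) (x y z : M) :
    (x ⋎ (y ⋏ z)) ⋏ z = (x ⋎ y) ⋏ z := by
  -- Since `x ⋎ (y ⋏ z) = (x ⋎ y) ⋏ (x ⋎ z)`, it remembers its left factor `x ⋎ y`.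
  have key : (x ⋎ (y ⋏ z)) ⋏ ((x ⋎ y) ⋏ z) = (x ⋎ (y ⋏ z)) ⋏ z := by
    rw [h.sup_inf_distrib, h.inf_inf_inf_left]
  rw [← key, ← h.sup_neg_inf_inf, h.sup_inf x y z, h.sup_inf_inf_sup]

/-! ### Associativity -/

theorem inf_neg_sup_inf_inf (h : CondLogic neg wedge vee) (x y z : M) :
    (x ⋏ ∼x) ⋎ ((x ⋏ y) ⋏ z) = (∼x ⋎ y) ⋏ (x ⋏ z) := by
  have key : ∼x ⋏ (x ⋏ z) = x ⋏ ∼x := by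
    simpa only [h.neg_neg, h.neg_inf_self] using h.inf_neg_inf (∼x) z
  rw [h.neg_sup_inf, key, h.inf_inf_inf_left]

/-- The conditional form of `(x ⋏ y) ⋏ z`. By `inf_neg_sup_inf_inf`, the right-hand side differs
from the left-hand side only by a disjunct `x ⋏ ∼x`; it ends in a factor `z`, and multiplying by
that `z` lets the disjunct be absorbed. -/
theorem inf_inf_eq (h : CondLogic neg wedge vee) (x y z : M) :
    (x ⋏ y) ⋏ z = (∼x ⋎ y) ⋏ (x ⋏ z) :=
  calc (x ⋏ y) ⋏ z = (x ⋏ (∼x ⋎ y)) ⋏ z := by rw [h.inf_neg_sup]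
    _ = ((x ⋏ ∼x) ⋎ (x ⋏ y)) ⋏ z := by rw [h.inf_sup]
    _ = ((x ⋏ ∼x) ⋎ ((x ⋏ y) ⋏ z)) ⋏ z := (h.sup_inf_inf_right _ _ _).symm
    _ = ((∼x ⋎ y) ⋏ (x ⋏ z)) ⋏ z := by rw [h.inf_neg_sup_inf_inf]
    _ = (∼x ⋎ y) ⋏ (x ⋏ z) := h.inf_inf_right_idem _ _ _

theorem inf_assoc (h : CondLogic neg wedge vee) (x y z : M) : (x ⋏ y) ⋏ z = x ⋏ (y ⋏ z) :=
  calc (x ⋏ y) ⋏ z = (∼x ⋎ y) ⋏ (x ⋏ z) := h.inf_inf_eq x y z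
    _ = (∼x ⋎ (y ⋏ (x ⋏ z))) ⋏ (x ⋏ z) := (h.sup_inf_inf_right _ _ _).symm
    _ = (x ⋏ (y ⋏ (x ⋏ z))) ⋏ z := (h.inf_inf_eq _ _ _).symm
    _ = (x ⋏ (y ⋏ z)) ⋏ z := by rw [h.inf_inf_inf_left']
    _ = x ⋏ (y ⋏ z) := h.inf_inf_right_idem x y z

end CondLogic

/-- If M with operations ', ∧, ∨ satisfies (1.1a), (1.1b), (1.1d),
(Mem2), (1.1f) and (1.1g), then M also satisfies the associativity law (1.1c). -/
theorem stmt_14 {M : Type*} (neg : M → M) (wedge vee : M → M → M)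
    (h11a : ∀ x, neg (neg x) = x)
    (h11b : ∀ x y, neg (wedge x y) = vee (neg x) (neg y))
    (h11d : ∀ x y z, wedge x (vee y z) = vee (wedge x y) (wedge x z))
    (hMem2 : ∀ x y z, wedge (vee x y) z = vee (wedge x z) (wedge (wedge (neg x) y) z))
    (h11f : ∀ x y, vee x (wedge x y) = x)
    (h11g : ∀ x y, vee (wedge x y) (wedge y x) = vee (wedge y x) (wedge x y)) :
    ∀ x y z, wedge (wedge x y) z = wedge x (wedge y z) := by
  exact CondLogic.inf_assoc ⟨h11a, h11b, h11d, hMem2, h11f, h11g⟩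
end

section
/- Every equation between SCL terms derivable from EqMSCL is derivable from EqCL; moreover, if A contains two distinct atoms a and b, then the equation (a ⩓ b) ⩔ (b ⩓ a) = (b ⩓ a) ⩔ (a ⩓ b) is derivable from EqCL but not from EqMSCL. (Hence MSCL ≺ CℓSCL: memorising short-circuit logic is strictly weaker than conditional short-circuit logic.) -/
/-!
The inclusion is an induction on derivations, and the displayed equation is an instance of (Com).

For the failure of the equation in EqMSCL, terms are interpreted as state transformers
`Hist → Bool × Hist`: evaluating a term returns a truth value and updates the history of what has
been evaluated. Short-circuiting is sequential composition, and "memorising" is the property that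
once a term has been evaluated, evaluating it again in any later history returns the same value and
leaves that history unchanged (`Memorising`). This property is preserved by the connectives and
is all that (Abs) and (Mem) need, so EqMSCL is sound for the interpretation (`DerEqMSCL.run_eq`).

In the model used here `a` is always true, while `b` is true if it is evaluated before `a` and
false if it is evaluated after. Hence `(a ⩓ b) ⩔ (b ⩓ a)` is false and
`(b ⩓ a) ⩔ (a ⩓ b)` is true from the starting history.
-/

/-- SCL terms over A: T, F, atoms, negation ¬, short-circuit conjunction ⩓ (and)
and short-circuit disjunction ⩔ (or). -/
inductive STerm (A : Type) : Type
  | T : STerm A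
  | F : STerm A
  | atom : A → STerm A
  | neg : STerm A → STerm A
  | and : STerm A → STerm A → STerm A
  | or : STerm A → STerm A → STerm A

/-- Derivability from EqMSCL: (Neg) F = ¬T, (Or) x ⩔ y = ¬(¬x ⩓ ¬y),
(Tand) T ⩓ x = x, (Abs) x ⩓ (x ⩔ y) = x,
(Mem) (x ⩔ y) ⩓ z = (¬x ⩓ (y ⩓ z)) ⩔ (x ⩓ z). -/
inductive DerEqMSCL {A : Type} : STerm A → STerm A → Prop
  | refl (s : STerm A) : DerEqMSCL s s
  | symm {s t : STerm A} : DerEqMSCL s t → DerEqMSCL t s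
  | trans {s t u : STerm A} : DerEqMSCL s t → DerEqMSCL t u → DerEqMSCL s u
  | negCongr {s t : STerm A} : DerEqMSCL s t → DerEqMSCL (.neg s) (.neg t)
  | andCongr {s s' t t' : STerm A} :
      DerEqMSCL s s' → DerEqMSCL t t' → DerEqMSCL (.and s t) (.and s' t')
  | orCongr {s s' t t' : STerm A} :
      DerEqMSCL s s' → DerEqMSCL t t' → DerEqMSCL (.or s t) (.or s' t')
  | negAx : DerEqMSCL (A := A) .F (.neg .T)
  | orAx (x y : STerm A) : DerEqMSCL (.or x y) (.neg (.and (.neg x) (.neg y)))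
  | tand (x : STerm A) : DerEqMSCL (.and .T x) x
  | abs (x y : STerm A) : DerEqMSCL (.and x (.or x y)) x
  | mem (x y z : STerm A) :
      DerEqMSCL (.and (.or x y) z) (.or (.and (.neg x) (.and y z)) (.and x z))

/-- Derivability from EqCL = EqMSCL + (Com) (x ⩓ y) ⩔ (y ⩓ x) = (y ⩓ x) ⩔ (x ⩓ y). -/
inductive DerEqCL {A : Type} : STerm A → STerm A → Prop
  | refl (s : STerm A) : DerEqCL s s
  | symm {s t : STerm A} : DerEqCL s t → DerEqCL t s
  | trans {s t u : STerm A} : DerEqCL s t → DerEqCL t u → DerEqCL s u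
  | negCongr {s t : STerm A} : DerEqCL s t → DerEqCL (.neg s) (.neg t)
  | andCongr {s s' t t' : STerm A} :
      DerEqCL s s' → DerEqCL t t' → DerEqCL (.and s t) (.and s' t')
  | orCongr {s s' t t' : STerm A} :
      DerEqCL s s' → DerEqCL t t' → DerEqCL (.or s t) (.or s' t')
  | negAx : DerEqCL (A := A) .F (.neg .T)
  | orAx (x y : STerm A) : DerEqCL (.or x y) (.neg (.and (.neg x) (.neg y)))
  | tand (x : STerm A) : DerEqCL (.and .T x) x
  | abs (x y : STerm A) : DerEqCL (.and x (.or x y)) x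
  | mem (x y z : STerm A) :
      DerEqCL (.and (.or x y) z) (.or (.and (.neg x) (.and y z)) (.and x z))
  | com (x y : STerm A) :
      DerEqCL (.or (.and x y) (.and y x)) (.or (.and y x) (.and x y))

/-- Which of the two distinguished atoms, if any, was evaluated first. -/
inductive Hist : Type
  | start
  | aFirst
  | bFirst

namespace Hist

/-- `Later s t`: the history `t` extends `s`. The histories `aFirst` and `bFirst` are final. -/
def Later (s t : Hist) : Prop := s = start ∨ s = t

theorem Later.refl (s : Hist) : Later s s := Or.inr rfl

theorem Later.trans {s t u : Hist} (h₁ : Later s t) (h₂ : Later t u) : Later s u := by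
  rcases h₁ with h₁ | rfl
  · exact Or.inl h₁
  · exact h₂

/-- Evaluation of the atom `a`: always true, recorded if nothing was recorded before. -/
def runA : Hist → Bool × Hist
  | start => (true, aFirst)
  | aFirst => (true, aFirst)
  | bFirst => (true, bFirst)

/-- Evaluation of the atom `b`: false exactly if `a` was evaluated first. -/
def runB : Hist → Bool × Hist
  | start => (true, bFirst)
  | aFirst => (false, aFirst)
  | bFirst => (true, bFirst)

end Hist

open Hist

open scoped Classical in
/-- Evaluation of a term: its truth value and the resulting history. Atoms other than `a` and `b`
are true and leave no trace. -/
noncomputable def run {A : Type} (a b : A) : STerm A → Hist → Bool × Hist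
  | .T, s => (true, s)
  | .F, s => (false, s)
  | .atom c, s => if c = a then runA s else if c = b then runB s else (true, s)
  | .neg x, s => (!(run a b x s).1, (run a b x s).2)
  | .and x y, s => if (run a b x s).1 then run a b y (run a b x s).2 else run a b x s
  | .or x y, s => if (run a b x s).1 then run a b x s else run a b y (run a b x s).2

/-- A state transformer that only extends the history, and whose re-evaluation in any later
history repeats the earlier value without changing that history. -/
def Memorising (f : Hist → Bool × Hist) : Prop :=
  ∀ s, Later s (f s).2 ∧ ∀ t, Later (f s).2 t → f t = ((f s).1, t)

theorem memorising_runA : Memorising runA := by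
  intro s
  refine ⟨by cases s <;> simp [runA, Later], fun t => ?_⟩
  cases s <;> cases t <;> simp [runA, Later]

theorem memorising_runB : Memorising runB := by
  intro s
  refine ⟨by cases s <;> simp [runB, Later], fun t => ?_⟩
  cases s <;> cases t <;> simp [runB, Later]

theorem memorising_run {A : Type} (a b : A) (x : STerm A) : Memorising (run a b x) := by
  induction x with
  | T => exact fun s => ⟨Later.refl s, fun t _ => rfl⟩
  | F => exact fun s => ⟨Later.refl s, fun t _ => rfl⟩
  | atom c =>
    by_cases ha : c = a
    · simpa [Memorising, run, ha] using memorising_runA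
    · by_cases hb : c = b
      · have hba : b ≠ a := fun h => ha (hb.trans h)
        simpa [Memorising, run, hb, hba] using memorising_runB
      · simp [Memorising, run, ha, hb, Later.refl]
  | neg x ih =>
    intro s
    refine ⟨(ih s).1, fun t ht => ?_⟩
    simp [run, (ih s).2 t ht]
  | and x y ihx ihy =>
    intro s
    have hx := ihx s
    have hy := ihy (run a b x s).2
    cases h : (run a b x s).1
    · simp only [run, h, Bool.false_eq_true, if_false]
      refine ⟨hx.1, fun t ht => ?_⟩
      simp [hx.2 t ht, h]
    · simp only [run, h, if_true]
      refine ⟨hx.1.trans hy.1, fun t ht => ?_⟩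
      simp [hx.2 t (hy.1.trans ht), h, hy.2 t ht]
  | or x y ihx ihy =>
    intro s
    have hx := ihx s
    have hy := ihy (run a b x s).2
    cases h : (run a b x s).1
    · simp only [run, h, Bool.false_eq_true, if_false]
      refine ⟨hx.1.trans hy.1, fun t ht => ?_⟩
      simp [hx.2 t (hy.1.trans ht), h, hy.2 t ht]
    · simp only [run, h, if_true]
      refine ⟨hx.1, fun t ht => ?_⟩
      simp [hx.2 t ht, h]

/-- Soundness of EqMSCL for the interpretation `run`. -/
theorem DerEqMSCL.run_eq {A : Type} (a b : A) {s t : STerm A} (h : DerEqMSCL s t) :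
    run a b s = run a b t := by
  induction h with
  | refl s => rfl
  | symm _ ih => exact ih.symm
  | trans _ _ ih₁ ih₂ => exact ih₁.trans ih₂
  | negCongr _ ih => funext σ; simp [run, ih]
  | andCongr _ _ ih₁ ih₂ => funext σ; simp [run, ih₁, ih₂]
  | orCongr _ _ ih₁ ih₂ => funext σ; simp [run, ih₁, ih₂]
  | negAx => rfl
  | orAx x y =>
    funext σ
    cases h : (run a b x σ).1 <;> simp [run, h]
    rw [← h]
  | tand x => rfl
  | abs x y =>
    funext σ
    have hx := (memorising_run a b x σ).2 _ (Later.refl _)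
    cases h : (run a b x σ).1 <;> simp [run, h, hx]
    rw [← h]
  | mem x y z =>
    funext σ
    have hx := (memorising_run a b x σ).2
    have hx₁ := hx _ (Later.refl _)
    -- On the right-hand side `x` is evaluated a second time; if it was false at first, this
    -- happens after `y`, and possibly `z`, have extended the history.
    have hy := (memorising_run a b y (run a b x σ).2).1
    have hz := (memorising_run a b z (run a b y (run a b x σ).2).2).1
    have hx₂ := hx _ hy
    have hx₃ := hx _ (hy.trans hz)
    cases h : (run a b x σ).1
    · cases h' : (run a b y (run a b x σ).2).1
      · simp [run, h, h', hx₂]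
        rw [← h']
      · cases h'' : (run a b z (run a b y (run a b x σ).2).2).1
        · simp [run, h, h', h'', hx₃]
          rw [← h'']
        · simp [run, h, h', h'']
    · simp [run, h, hx₁]

/-- Every equation between SCL terms derivable from EqMSCL is derivable
from EqCL; and for distinct atoms a, b, the equation
(a ⩓ b) ⩔ (b ⩓ a) = (b ⩓ a) ⩔ (a ⩓ b) is derivable from EqCL but not from EqMSCL.
Hence MSCL ≺ CℓSCL. -/
theorem stmt_16 {A : Type} :
    (∀ s t : STerm A, DerEqMSCL s t → DerEqCL s t) ∧
    (∀ a b : A, a ≠ b →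
      DerEqCL (.or (.and (.atom a) (.atom b)) (.and (.atom b) (.atom a)))
              (.or (.and (.atom b) (.atom a)) (.and (.atom a) (.atom b))) ∧
      ¬ DerEqMSCL (.or (.and (.atom a) (.atom b)) (.and (.atom b) (.atom a)))
                  (.or (.and (.atom b) (.atom a)) (.and (.atom a) (.atom b)))) := by
  refine ⟨fun s t h => ?_, fun a b hab => ⟨.com _ _, fun h => ?_⟩⟩
  · induction h with
    | refl s => exact .refl s
    | symm _ ih => exact .symm ih
    | trans _ _ ih₁ ih₂ => exact .trans ih₁ ih₂
    | negCongr _ ih => exact .negCongr ih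
    | andCongr _ _ ih₁ ih₂ => exact .andCongr ih₁ ih₂
    | orCongr _ _ ih₁ ih₂ => exact .orCongr ih₁ ih₂
    | negAx => exact .negAx
    | orAx x y => exact .orAx x y
    | tand x => exact .tand x
    | abs x y => exact .abs x y
    | mem x y z => exact .mem x y z
  · have h₀ := congrFun (h.run_eq a b) start
    simp [run, runA, runB, hab.symm] at h₀
end

section
/- Let M be a set with a unary operation ¬, binary operations ⩓ and ⩔, and distinguished elements T, F, U satisfying, for all elements, the EqCL^U axioms: (Neg) F = ¬T, (Or) x ⩔ y = ¬(¬x ⩓ ¬y), (Tand) T ⩓ x = x, (Abs) x ⩓ (x ⩔ y) = x, (Mem) (x ⩔ y) ⩓ z = (¬x ⩓ (y ⩓ z)) ⩔ (x ⩓ z), (Com) (x ⩓ y) ⩔ (y ⩓ x) = (y ⩓ x) ⩔ (x ⩓ y), and (Und) ¬U = U. Define the full left-sequential connectives by x ∧ y = (x ⩓ y) ⩔ (y ⩓ x) and x ∨ y = ¬(¬x ∧ ¬y). Then M satisfies all axioms of Bochvar's three-valued strict logic SB: (S1) ¬T = F, (S2) ¬U = U, (S3) ¬¬x = x, (S4)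 ¬(x ∧ y) = ¬x ∨ ¬y, (S6) (x ∧ y) ∧ z = x ∧ (y ∧ z), (S7) T ∧ x = x, (S8) x ∨ (¬x ∧ y) = x ∨ y, (S9) x ∧ y = y ∧ x, (S10) x ∧ (y ∨ z) = (x ∧ y) ∨ (x ∧ z), and (S11) U ∧ x = U, for all elements x, y, z. -/
/-!
The classical route to such identities is that every algebra satisfying the axioms embeds into a
power of the three-element algebra, so that identities can be checked by truth tables. Here the
argument is equational: enough of the theory of `⩓`, `⩔` is derived (double negation, duality,
idempotence, the memorizing law `x ⩓ (y ⩓ x) = x ⩓ y`, associativity, left distributivity) to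
justify a case distinction inside the algebra.

Write `e x = x ⩔ T`, which is true or undefined according as `x` is defined or not, and call `s`
*strict in* `x` if `e x ⩓ s = s`. Since `e x ⩓ s = (¬x ⩓ s) ⩔ (x ⩓ s)`, two elements strict
in `x` are equal once they agree after prefixing `x ⩓` and after prefixing `¬x ⩓`
(`CondAlg.cases`). Full conjunction is strict in its first argument. Prefixing is a congruence for
negation and full conjunction (`congr_neg`, `congr_full`); prefixing by `x` turns `x ∧ y` into `y`,
and prefixing by `¬x` turns `x ∧ y` into `y ⩓ F`. Each of associativity, distributivity and
absorption thereby reduces to an identity with fewer variables. Symmetry of `∧` is the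
commutativity axiom itself.
-/

namespace ShortCircuit

/-- Conditional logic without the undefined constant and without the commutativity axiom
(memorizing short-circuit logic), with double negation and the De Morgan law in place of the
definition of `o`. Here `n`, `a`, `o` stand for `¬`, `⩓`, `⩔`. -/
structure CondAlg {M : Type*} (n : M → M) (a o : M → M → M) (T F : M) : Prop where
  nT : n T = F
  nn : ∀ x, n (n x) = x
  na : ∀ x y, n (a x y) = o (n x) (n y)
  Ta : ∀ x, a T x = x
  abs : ∀ x y, a x (o x y) = x
  mem : ∀ x y z, a (o x y) z = o (a (n x) (a y z)) (a x z)

/-- Double negation follows from the axioms: `z = (F ⩓ z) ⩔ z` shows that negation is surjective,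
hence `¬(F ⩓ z) = T`, and then `z = ¬(¬(F ⩓ z) ⩓ ¬z) = ¬(T ⩓ ¬z)`. -/
theorem neg_neg_of_axioms {M : Type*} {n : M → M} {a o : M → M → M} {T F : M}
    (hn : F = n T)
    (hOr : ∀ x y, o x y = n (a (n x) (n y)))
    (hT : ∀ x, a T x = x)
    (hA : ∀ x y, a x (o x y) = x)
    (hM : ∀ x y z, a (o x y) z = o (a (n x) (a y z)) (a x z)) (z : M) : n (n z) = z := by
  have h1 : ∀ y, o T y = T := fun y => by rw [← hT (o T y), hA]
  have h3 : ∀ y, n (a F (n y)) = T := fun y => by rw [hn, ← hOr, h1]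
  have h4 : ∀ z, z = o (a F z) z := fun z => by
    have := hM T T z
    rw [h1, ← hn] at this
    simpa only [hT] using this
  have hs : ∀ z, ∃ w, z = n w := fun z => ⟨_, (h4 z).trans (hOr _ _)⟩
  obtain ⟨w, hw⟩ := hs z
  have := h4 z
  rw [hOr, hw, h3, ← hw, hT] at this
  exact this.symm

theorem condAlg_of_axioms {M : Type*} {n : M → M} {a o : M → M → M} {T F : M}
    (hn : F = n T)
    (hOr : ∀ x y, o x y = n (a (n x) (n y)))
    (hT : ∀ x, a T x = x)
    (hA : ∀ x y, a x (o x y) = x)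
    (hM : ∀ x y z, a (o x y) z = o (a (n x) (a y z)) (a x z)) : CondAlg n a o T F where
  nT := hn.symm
  nn := neg_neg_of_axioms hn hOr hT hA hM
  na x y := by
    have nn := neg_neg_of_axioms hn hOr hT hA hM
    rw [hOr, nn, nn]
  Ta := hT
  abs := hA
  mem := hM

namespace CondAlg

variable {M : Type*} {n : M → M} {a o : M → M → M} {T F : M}

theorem nF (H : CondAlg n a o T F) : n F = T := by rw [← H.nT, H.nn]

theorem no (H : CondAlg n a o T F) (x y : M) : n (o x y) = a (n x) (n y) := by
  rw [← H.nn x, ← H.nn y, ← H.na, H.nn, H.nn, H.nn]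

/-- Conjugation by negation exchanges `⩓` with `⩔` and `T` with `F`. -/
theorem dual (H : CondAlg n a o T F) : CondAlg n o a F T where
  nT := H.nF
  nn := H.nn
  na := H.no
  Ta x := by
    have := H.Ta (n x)
    rw [← H.nn (o F x), H.no, H.nF, this, H.nn]
  abs x y := by
    have := H.abs (n x) (n y)
    rw [← H.na, ← H.no] at this
    rw [← H.nn (o x (a x y)), this, H.nn]
  mem x y z := by
    have := H.mem (n x) (n y) (n z)
    simp only [← H.na, ← H.no] at this
    rw [← H.nn (o (a x y) z), this, H.nn]

/-! ### Short-circuit laws -/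

theorem Fa (H : CondAlg n a o T F) (x : M) : a F x = F := by
  have := H.abs F x
  rwa [H.dual.Ta] at this

theorem oF (H : CondAlg n a o T F) (x : M) : o x F = x := by
  -- expand `(F ⩔ T) ⩓ x` with `mem`
  have h := H.mem F T x
  rw [H.dual.Ta, H.nF, H.Ta, H.Ta, H.Fa] at h
  exact h.symm

theorem aT (H : CondAlg n a o T F) (x : M) : a x T = x := H.dual.oF x

theorem a_self (H : CondAlg n a o T F) (x : M) : a x x = x := by
  have := H.abs x F
  rwa [H.oF] at this

theorem o_eq (H : CondAlg n a o T F) (x y : M) : o x y = o (a (n x) y) x := by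
  have := H.mem x y T
  rwa [H.aT, H.aT, H.aT] at this

theorem a_eq (H : CondAlg n a o T F) (x y : M) : a x y = a (o (n x) y) x := H.dual.o_eq x y

theorem a_eq_o (H : CondAlg n a o T F) (x y : M) : a x y = o (a (n x) F) (a x y) := by
  have := H.mem x F y
  rwa [H.oF, H.Fa] at this

theorem a_neg (H : CondAlg n a o T F) (x : M) : a x (n x) = a x F := by
  have := H.o_eq x T
  have nT := H.nT
  have nF := H.nF
  have nn := H.nn
  have na := H.na
  have no := H.no
  have hTa := H.Ta
  have hFa := H.Fa
  have hFo := H.dual.Ta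
  have hTo := H.dual.Fa
  have hA := H.abs
  have hA2 := H.dual.abs
  have hM := H.mem
  have hM2 := H.dual.mem
  have haT := H.aT
  have hoF := H.oF
  have ai := H.a_self
  have oi := H.dual.a_self
  have i1 := H.o_eq
  have i2 := H.a_eq
  have i3 := H.a_eq_o
  have i4 := H.dual.a_eq_o
  grind

theorem a_a_left (H : CondAlg n a o T F) (x y : M) : a x (a x y) = a x y := by
  have nT := H.nT
  have nF := H.nF
  have nn := H.nn
  have na := H.na
  have no := H.no
  have hTa := H.Ta
  have hFa := H.Fa
  have hFo := H.dual.Ta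
  have hTo := H.dual.Fa
  have hA := H.abs
  have hA2 := H.dual.abs
  have hM := H.mem
  have hM2 := H.dual.mem
  have haT := H.aT
  have hoF := H.oF
  have ai := H.a_self
  have oi := H.dual.a_self
  have i1 := H.o_eq
  have i2 := H.a_eq
  have i3 := H.a_eq_o
  have i4 := H.dual.a_eq_o
  have i5 := H.a_neg
  grind (splits := 0) (ematch := 20) (instances := 6000)

theorem a_neg_left (H : CondAlg n a o T F) (x y : M) : a x (a (n x) y) = a x F := by
  have nT := H.nT
  have nF := H.nF
  have nn := H.nn
  have na := H.na
  have no := H.no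
  have hTa := H.Ta
  have hFa := H.Fa
  have hFo := H.dual.Ta
  have hTo := H.dual.Fa
  have hA := H.abs
  have hA2 := H.dual.abs
  have hM := H.mem
  have hM2 := H.dual.mem
  have haT := H.aT
  have hoF := H.oF
  have ai := H.a_self
  have oi := H.dual.a_self
  have i1 := H.o_eq
  have i2 := H.a_eq
  have i3 := H.a_eq_o
  have i4 := H.dual.a_eq_o
  have i5 := H.a_neg
  have i6 := H.a_a_left
  have i7 := H.dual.a_a_left
  grind (splits := 0) (ematch := 20) (instances := 6000)

/-- The memorizing law: a second evaluation of `x` adds nothing. -/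
theorem memo (H : CondAlg n a o T F) (x y : M) : a x (a y x) = a x y := by
  have nT := H.nT
  have nF := H.nF
  have nn := H.nn
  have na := H.na
  have no := H.no
  have hTa := H.Ta
  have hFa := H.Fa
  have hFo := H.dual.Ta
  have hTo := H.dual.Fa
  have hA := H.abs
  have hA2 := H.dual.abs
  have hM := H.mem
  have hM2 := H.dual.mem
  have haT := H.aT
  have hoF := H.oF
  have ai := H.a_self
  have oi := H.dual.a_self
  have i1 := H.o_eq
  have i2 := H.a_eq
  have i3 := H.a_eq_o
  have i4 := H.dual.a_eq_o
  have i5 := H.a_neg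
  have i6 := H.a_a_left
  have i7 := H.dual.a_a_left
  have j0 := H.a_neg_left
  grind (splits := 0) (ematch := 20) (instances := 6000)

theorem o_neg_left (H : CondAlg n a o T F) (x y : M) : o x (a (n x) y) = o x y := by
  have nT := H.nT
  have nF := H.nF
  have nn := H.nn
  have na := H.na
  have no := H.no
  have hTa := H.Ta
  have hFa := H.Fa
  have hFo := H.dual.Ta
  have hTo := H.dual.Fa
  have hA := H.abs
  have hA2 := H.dual.abs
  have hM := H.mem
  have hM2 := H.dual.mem
  have haT := H.aT
  have hoF := H.oF
  have ai := H.a_self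
  have oi := H.dual.a_self
  have i1 := H.o_eq
  have i2 := H.a_eq
  have i3 := H.a_eq_o
  have i4 := H.dual.a_eq_o
  have i5 := H.a_neg
  have i6 := H.a_a_left
  have i7 := H.dual.a_a_left
  have j0 := H.a_neg_left
  have j1 := H.memo
  grind (splits := 0) (ematch := 20) (instances := 6000)

theorem a_o_a (H : CondAlg n a o T F) (x y z : M) : a x (a (o x y) z) = a x z := by
  have nT := H.nT
  have nF := H.nF
  have nn := H.nn
  have na := H.na
  have no := H.no
  have hTa := H.Ta
  have hFa := H.Fa
  have hFo := H.dual.Ta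
  have hTo := H.dual.Fa
  have hA := H.abs
  have hA2 := H.dual.abs
  have hM := H.mem
  have hM2 := H.dual.mem
  have haT := H.aT
  have hoF := H.oF
  have ai := H.a_self
  have oi := H.dual.a_self
  have i1 := H.o_eq
  have i2 := H.a_eq
  have i3 := H.a_eq_o
  have i4 := H.dual.a_eq_o
  have i5 := H.a_neg
  have i6 := H.a_a_left
  have i7 := H.dual.a_a_left
  have j0 := H.a_neg_left
  have j1 := H.memo
  have j2 := H.o_neg_left
  grind (splits := 0) (ematch := 20) (instances := 6000)

theorem a_a_a (H : CondAlg n a o T F) (x y z : M) : a x (a (a x y) z) = a (a x y) z := by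
  have nT := H.nT
  have nF := H.nF
  have nn := H.nn
  have na := H.na
  have no := H.no
  have hTa := H.Ta
  have hFa := H.Fa
  have hFo := H.dual.Ta
  have hTo := H.dual.Fa
  have hA := H.abs
  have hA2 := H.dual.abs
  have hM := H.mem
  have hM2 := H.dual.mem
  have haT := H.aT
  have hoF := H.oF
  have ai := H.a_self
  have oi := H.dual.a_self
  have i1 := H.o_eq
  have i2 := H.a_eq
  have i3 := H.a_eq_o
  have i4 := H.dual.a_eq_o
  have i5 := H.a_neg
  have i6 := H.a_a_left
  have i7 := H.dual.a_a_left
  have j0 := H.a_neg_left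
  have j1 := H.memo
  have j2 := H.o_neg_left
  have k1 := H.a_o_a
  grind (splits := 0) (ematch := 20) (instances := 6000)

theorem a_neg_o (H : CondAlg n a o T F) (x y : M) : a x (o (n x) y) = a x y := by
  have := H.dual.o_neg_left x y
  exact this

theorem a_a_o (H : CondAlg n a o T F) (x y z : M) : a x (a z (o x y)) = a x z := by
  rw [← H.a_o_a x y (a z (o x y)), H.memo, H.a_o_a]

/-- After `x`, a final disjunct guarded by `¬x` can be dropped. -/
theorem a_o_neg (H : CondAlg n a o T F) (x y z : M) : a x (o z (a (n x) y)) = a x z := by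
  rw [← H.a_neg_o, H.dual.a_a_o, H.a_neg_o]

theorem a_neg_o_a (H : CondAlg n a o T F) (x y z : M) : a x (a (o (n x) y) z) = a x (a y z) := by
  rw [H.mem, H.nn, H.a_o_neg, H.a_a_left]

theorem assoc (H : CondAlg n a o T F) (x y z : M) : a (a x y) z = a x (a y z) := by
  have h : o (n x) (a x y) = o (n x) y := by
    have := H.o_neg_left (n x) y
    rwa [H.nn] at this
  rw [← H.a_a_a, ← H.a_neg_o_a, h, H.a_neg_o_a]

/-- Prefixing by `x` is a congruence for negation. -/
theorem a_neg_a (H : CondAlg n a o T F) (x p : M) : a x (n (a x p)) = a x (n p) := by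
  rw [H.na, H.a_neg_o]

theorem a_o_a_right (H : CondAlg n a o T F) (x y z : M) : a x (o y (a x z)) = a x (o y z) := by
  have e : a x (a (n y) (n (a x z))) = a x (a (n y) (n z)) := by
    rw [← H.assoc, ← H.memo x (n y), H.assoc, H.assoc, H.a_neg_a, ← H.assoc, ← H.assoc,
      H.assoc x, H.memo, H.assoc]
  have := H.a_neg_a x (a (n y) (n (a x z)))
  rw [e, H.a_neg_a] at this
  simpa only [H.na, H.no, H.nn] using this.symm

theorem distrib (H : CondAlg n a o T F) (x y z : M) : a x (o y z) = o (a x y) (a x z) := by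
  rw [H.dual.mem, H.dual.abs, ← H.a_eq, H.a_o_a_right]

/-! ### Strictness -/

theorem aF_a (H : CondAlg n a o T F) (x y : M) : a (a x F) y = a x F := by
  rw [H.assoc, H.Fa]

theorem e_eq (H : CondAlg n a o T F) (x : M) : o x T = o (n x) x := by
  rw [H.o_eq, H.aT]

theorem e_neg (H : CondAlg n a o T F) (x : M) : o (n x) T = o x T := by
  rw [H.e_eq x, ← H.dual.a_neg, H.nn]

theorem e_a (H : CondAlg n a o T F) (x s : M) : a (o x T) s = o (a (n x) s) (a x s) := by
  rw [H.mem, H.Ta]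

/-- `s` is strict in `x`: if `x` is undefined, then so is `s`. Here `x ⩔ T` is true when `x` is
defined and undefined otherwise. -/
def Strict (_ : CondAlg n a o T F) (x s : M) : Prop := a (o x T) s = s

/-- Case distinction on the value of `x`. -/
theorem cases (H : CondAlg n a o T F) {x s t : M} (hs : H.Strict x s) (ht : H.Strict x t)
    (h1 : a x s = a x t) (h2 : a (n x) s = a (n x) t) : s = t := by
  rw [← hs, ← ht, H.e_a, H.e_a, h1, h2]

theorem Strict.a_left {H : CondAlg n a o T F} {x p : M} (h : H.Strict x p) (z : M) :
    H.Strict x (a p z) := by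
  unfold Strict at *
  rw [← H.assoc, h]

theorem strict_self (H : CondAlg n a o T F) (x : M) : H.Strict x x := by
  unfold Strict
  have h := H.a_neg (n x)
  have k := H.a_eq_o x T
  rw [H.nn] at h
  rw [H.aT] at k
  rw [H.e_a, H.a_self, h]
  exact k.symm

/-- Both sides are undefined or false, and undefined exactly when `x` is. -/
theorem neg_aF (H : CondAlg n a o T F) (x : M) : a (n x) F = a x F := by
  have h := H.e_neg x
  apply_fun n at h
  rwa [H.no, H.no, H.nT, H.nn, eq_comm] at h

theorem Strict.neg {H : CondAlg n a o T F} {x p : M} (h : H.Strict x p) : H.Strict x (n p) := by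
  unfold Strict at *
  have heF : a (o x T) F = n (o x T) := by
    rw [H.no, H.nT, H.e_a, H.neg_aF, H.dual.a_self]
  have k : n p = a (o x T) (n p) := by
    conv_lhs => rw [← h, H.na, H.o_eq, H.nn, ← heF, ← H.distrib, H.oF]
  exact k.symm

theorem Strict.oT {H : CondAlg n a o T F} {x p : M} (h : H.Strict x p) (z : M) :
    H.Strict x (o p z) := by
  have := (h.neg.a_left (n z)).neg
  rwa [← H.no, H.nn] at this

/-! ### Full conjunction -/

/-- Full left-sequential conjunction. -/
def full (_ : CondAlg n a o T F) (x y : M) : M := o (a x y) (a y x)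

theorem T_full (H : CondAlg n a o T F) (x : M) : H.full T x = x := by
  rw [full, H.Ta, H.aT, H.dual.a_self]

theorem F_full (H : CondAlg n a o T F) (x : M) : H.full F x = a x F := by
  rw [full, H.Fa, H.dual.Ta]

theorem a_full (H : CondAlg n a o T F) (x y : M) : a x (H.full x y) = a x y := by
  rw [full, H.distrib, H.memo, H.a_a_left, H.dual.a_self]

/-- Prefixing by `x` is a congruence for full conjunction. -/
theorem congr_full (H : CondAlg n a o T F) {x p q r s : M} (h : a x p = a x q)
    (k : a x r = a x s) : a x (H.full p r) = a x (H.full q s) := by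
  have key : ∀ {p q r s : M}, a x p = a x q → a x r = a x s → a x (a p r) = a x (a q s) := by
    intro p q r s h k
    rw [← H.assoc, h, ← H.memo x q, H.assoc, H.assoc, k, ← H.assoc q, ← H.assoc, H.memo, H.assoc]
  rw [full, full, H.distrib, H.distrib, key h k, key k h]

theorem congr_neg (H : CondAlg n a o T F) {x p q : M} (h : a x p = a x q) :
    a x (n p) = a x (n q) := by
  rw [← H.a_neg_a, h, H.a_neg_a]

theorem neg_a_full (H : CondAlg n a o T F) (x y : M) :
    a (n x) (H.full x y) = a (n x) (a y F) := by
  have h : a (n x) x = a (n x) F := by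
    have := H.a_neg (n x)
    rwa [H.nn] at this
  rw [H.congr_full h rfl, H.F_full]

theorem Strict.full_left {H : CondAlg n a o T F} {x p : M} (h : H.Strict x p) (z : M) :
    H.Strict x (H.full p z) := by
  -- `p ⩓ z` is evaluated first and a disjunction is strict in its first argument
  have e : H.full p z = a (o (a p z) T) (H.full p z) := by
    have := H.dual.a_eq_o (a p z) (a z p)
    rw [H.e_neg] at this
    exact this
  rw [e]
  exact ((h.a_left z).oT T).a_left _

theorem neg_a_self (H : CondAlg n a o T F) (x : M) : a (n x) x = a (n x) F := by
  have := H.a_neg (n x)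
  rwa [H.nn] at this

theorem a_self_T (H : CondAlg n a o T F) (x : M) : a x x = a x T := by
  rw [H.a_self, H.aT]

theorem neg_a_a (H : CondAlg n a o T F) (x y : M) : a (n x) (a x y) = a (n x) F := by
  have := H.a_neg_left (n x) y
  rwa [H.nn] at this

/-- Full disjunction, as the De Morgan dual of full conjunction. -/
def fullOr (H : CondAlg n a o T F) (x y : M) : M := n (H.full (n x) (n y))

theorem congr_fullOr (H : CondAlg n a o T F) {x p q r s : M} (h : a x p = a x q)
    (k : a x r = a x s) : a x (H.fullOr p r) = a x (H.fullOr q s) :=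
  H.congr_neg (H.congr_full (H.congr_neg h) (H.congr_neg k))

theorem strict_fullOr (H : CondAlg n a o T F) {x p : M} (h : H.Strict x p) (z : M) :
    H.Strict x (H.fullOr p z) := (h.neg.full_left (n z)).neg

theorem F_fullOr (H : CondAlg n a o T F) (x : M) : H.fullOr F x = x := by
  rw [fullOr, H.nF, H.T_full, H.nn]

theorem T_fullOr (H : CondAlg n a o T F) (x : M) : H.fullOr T x = o x T := by
  rw [fullOr, H.nT, H.F_full, H.na, H.nn, H.nF]

/-- Being defined does not change under passing to the false value `x ⩓ F`. -/
theorem aF_oT (H : CondAlg n a o T F) (x : M) : o (a x F) T = o x T := by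
  rw [H.dual.mem, H.dual.Ta, H.e_neg, H.a_self]

theorem oT_aF (H : CondAlg n a o T F) (x : M) : a (o x T) F = a x F := by
  rw [H.e_a, H.neg_aF, H.dual.a_self]

theorem aF_aF (H : CondAlg n a o T F) (x : M) : a (a x F) F = a x F := by
  rw [H.assoc, H.a_self]

/-! ### The laws of strict logic -/

theorem full_assoc (H : CondAlg n a o T F) (x y z : M) :
    H.full (H.full x y) z = H.full x (H.full y z) := by
  -- the case of a false argument
  have key : ∀ y z, H.full (a y F) z = a (H.full y z) F := fun y z => by
    refine H.cases (((H.strict_self y).a_left F).full_left z)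
      (((H.strict_self y).full_left z).a_left F) ?_ ?_
    · rw [H.congr_full (H.a_a_left y F) rfl, H.F_full, ← H.assoc _ (H.full y z), H.a_full, H.assoc]
    · rw [H.congr_full (H.neg_a_a y F) rfl, H.F_full, ← H.assoc _ (H.full y z), H.neg_a_full,
        H.assoc, H.aF_aF]
  refine H.cases (((H.strict_self x).full_left y).full_left z)
    ((H.strict_self x).full_left _) ?_ ?_
  · rw [H.congr_full (H.a_full x y) rfl, H.a_full]
  · rw [H.congr_full (H.neg_a_full x y) rfl, H.neg_a_full, key]

theorem fullOr_neg_full (H : CondAlg n a o T F) (x y : M) :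
    H.fullOr x (H.full (n x) y) = H.fullOr x y := by
  refine H.cases (H.strict_fullOr (H.strict_self x) _) (H.strict_fullOr (H.strict_self x) _) ?_ ?_
  · have h := H.neg_a_full (n x) y
    rw [H.nn] at h
    rw [H.congr_fullOr (H.a_self_T x) h, H.congr_fullOr (H.a_self_T x) rfl, H.T_fullOr, H.T_fullOr,
      H.aF_oT]
  · rw [H.congr_fullOr (H.neg_a_self x) (H.a_full (n x) y), H.congr_fullOr (H.neg_a_self x) rfl]

theorem full_fullOr (H : CondAlg n a o T F) (x y z : M) :
    H.full x (H.fullOr y z) = H.fullOr (H.full x y) (H.full x z) := by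
  -- the case of a false argument
  have key : ∀ y z, a (H.fullOr y z) F = H.fullOr (a y F) (a z F) := fun y z => by
    refine H.cases ((H.strict_fullOr (H.strict_self y) z).a_left F)
      (H.strict_fullOr ((H.strict_self y).a_left F) _) ?_ ?_
    · rw [← H.assoc, H.congr_fullOr (H.a_self_T y) rfl, H.T_fullOr,
        H.congr_fullOr (H.a_a_left y F) rfl, H.F_fullOr, H.assoc, H.oT_aF]
    · rw [← H.assoc, H.congr_fullOr (H.neg_a_self y) rfl, H.F_fullOr,
        H.congr_fullOr (H.neg_a_a y F) rfl, H.F_fullOr, H.assoc]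
  refine H.cases ((H.strict_self x).full_left _)
    (H.strict_fullOr ((H.strict_self x).full_left y) _) ?_ ?_
  · rw [H.a_full, H.congr_fullOr (H.a_full x y) (H.a_full x z)]
  · rw [H.neg_a_full, H.congr_fullOr (H.neg_a_full x y) (H.neg_a_full x z), key]

theorem full_of_neg_eq (H : CondAlg n a o T F) {U : M} (hU : n U = U) (x : M) :
    H.full U x = U := by
  have h1 : a U F = U := by
    rw [← H.a_neg, hU, H.a_self]
  have h2 : ∀ y, a U y = U := fun y => by rw [← h1, H.aF_a]
  have h3 : o U T = U := by
    rw [H.e_eq, hU, H.dual.a_self]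
  have h := (H.strict_self U).full_left x
  rw [CondAlg.Strict, h3, h2] at h
  exact h.symm

end CondAlg

end ShortCircuit


/-- If M with ¬, ⩓ (scand), ⩔ (scor) and constants T, F, U satisfies
the EqCL^U axioms, and the full left-sequential connectives are defined by
x ∧ y = (x ⩓ y) ⩔ (y ⩓ x) and x ∨ y = ¬(¬x ∧ ¬y), then M satisfies all the axioms
(S1)–(S4), (S6)–(S11) of Bochvar's three-valued strict logic SB. -/
theorem stmt_17 {M : Type*} (neg : M → M) (scand scor : M → M → M) (T F U : M)
    (hNeg : F = neg T)
    (hOr : ∀ x y, scor x y = neg (scand (neg x) (neg y)))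
    (hTand : ∀ x, scand T x = x)
    (hAbs : ∀ x y, scand x (scor x y) = x)
    (hMem : ∀ x y z, scand (scor x y) z = scor (scand (neg x) (scand y z)) (scand x z))
    (hCom : ∀ x y, scor (scand x y) (scand y x) = scor (scand y x) (scand x y))
    (hUnd : neg U = U)
    (fand forr : M → M → M)
    (hfand : ∀ x y, fand x y = scor (scand x y) (scand y x))
    (hfor : ∀ x y, forr x y = neg (fand (neg x) (neg y))) :
    (neg T = F) ∧
    (neg U = U) ∧
    (∀ x, neg (neg x) = x) ∧
    (∀ x y, neg (fand x y) = forr (neg x) (neg y)) ∧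
    (∀ x y z, fand (fand x y) z = fand x (fand y z)) ∧
    (∀ x, fand T x = x) ∧
    (∀ x y, forr x (fand (neg x) y) = forr x y) ∧
    (∀ x y, fand x y = fand y x) ∧
    (∀ x y z, fand x (forr y z) = forr (fand x y) (fand x z)) ∧
    (∀ x, fand U x = U) := by
  have H : ShortCircuit.CondAlg neg scand scor T F :=
    ShortCircuit.condAlg_of_axioms hNeg hOr hTand hAbs hMem
  obtain rfl : fand = H.full := by
    funext x y
    exact hfand x y
  obtain rfl : forr = H.fullOr := by
    funext x y
    exact hfor x y
  refine ⟨hNeg.symm, hUnd, H.nn, fun x y => ?_, H.full_assoc, H.T_full, H.fullOr_neg_full,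
    hCom, H.full_fullOr, H.full_of_neg_eq hUnd⟩
  rw [ShortCircuit.CondAlg.fullOr, H.nn, H.nn]
end

section
/- Let M be a set with a unary operation ¬, binary operations ∧ and ∨, and a distinguished element T satisfying, for all elements, (S3) ¬¬x = x, (S4) ¬(x ∧ y) = ¬x ∨ ¬y, (S6) (x ∧ y) ∧ z = x ∧ (y ∧ z), (S7) T ∧ x = x, (S8) x ∨ (¬x ∧ y) = x ∨ y, and (S9) x ∧ y = y ∧ x. Then M also satisfies the distributive law (S10) x ∧ (y ∨ z) = (x ∧ y) ∨ (x ∧ z) for all elements. -/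
/-!
Write `F = ¬T`. The axioms give idempotence of `∧`, the dual absorption law
`x ∧ (¬x ∨ y) = x ∧ y`, and `x ∧ ¬x = x ∧ F`; since `x ∧ ¬x` is symmetric in `x` and `¬x`, also
`¬x ∧ F = x ∧ F`. Hence `x ∧ F` plays the role of a "local bottom" below `x`, and
`(x ∨ y) ∧ F = x ∧ y ∧ F`, so it depends only on the elements occurring in a term.

As in a Boolean algebra, if `a ∧ ¬b` is the local bottom of `a`, then `a ∧ b = a`
(`and_eq_left`). So two elements `a`, `b` agree as soon as `a ∧ ¬b = a ∧ F` and `b ∧ ¬a = b ∧ F`.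
Take `a = x ∧ (y ∨ z)` and `b = (x ∧ y) ∨ (x ∧ z)`, both with local bottom `x ∧ y ∧ z ∧ F`. The
first equation is a direct computation by absorption. For the second, `¬a` meets both `x ∧ y` and
`x ∧ z` in the local bottom, so `¬a` lies below `¬(x ∧ y)` and `¬(x ∧ z)`, hence below `¬b`.
-/

section

variable {M : Type*} {neg : M → M} {fand forr : M → M → M} {T : M}

theorem or_eq (hS3 : ∀ x, neg (neg x) = x)
    (hS4 : ∀ x y, neg (fand x y) = forr (neg x) (neg y)) (x y : M) :
    forr x y = neg (fand (neg x) (neg y)) := by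
  rw [hS4, hS3, hS3]

/-- The dual absorption law `x ∧ (¬x ∨ y) = x ∧ y`, with `y` replaced by `¬y` and the disjunction written out by `∧` and `¬`. -/
theorem and_absorb (hS3 : ∀ x, neg (neg x) = x)
    (hS4 : ∀ x y, neg (fand x y) = forr (neg x) (neg y))
    (hS8 : ∀ x y, forr x (fand (neg x) y) = forr x y) (x y : M) :
    fand x (neg (fand x y)) = fand x (neg y) := by
  have h := congrArg neg (hS8 (neg x) y)
  rwa [or_eq hS3 hS4, or_eq hS3 hS4, hS3, hS3, hS3] at h

theorem and_neg_self (hS3 : ∀ x, neg (neg x) = x)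
    (hS4 : ∀ x y, neg (fand x y) = forr (neg x) (neg y))
    (hS7 : ∀ x, fand T x = x)
    (hS8 : ∀ x y, forr x (fand (neg x) y) = forr x y)
    (hS9 : ∀ x y, fand x y = fand y x) (x : M) :
    fand x (neg x) = fand x (neg T) := by
  have h := and_absorb hS3 hS4 hS8 x T
  rwa [hS9 x T, hS7] at h

theorem neg_and_bot (hS3 : ∀ x, neg (neg x) = x)
    (hS4 : ∀ x y, neg (fand x y) = forr (neg x) (neg y))
    (hS7 : ∀ x, fand T x = x)
    (hS8 : ∀ x y, forr x (fand (neg x) y) = forr x y)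
    (hS9 : ∀ x y, fand x y = fand y x) (x : M) :
    fand (neg x) (neg T) = fand x (neg T) := by
  rw [← and_neg_self hS3 hS4 hS7 hS8 hS9, ← and_neg_self hS3 hS4 hS7 hS8 hS9, hS3, hS9]

/-- If `a ∧ ¬b` is the local bottom `a ∧ ¬T`, then `a` lies below `b` in the meet order. -/
theorem and_eq_left (hS3 : ∀ x, neg (neg x) = x)
    (hS4 : ∀ x y, neg (fand x y) = forr (neg x) (neg y))
    (hS7 : ∀ x, fand T x = x)
    (hS8 : ∀ x y, forr x (fand (neg x) y) = forr x y)
    (hS9 : ∀ x y, fand x y = fand y x) {a b : M}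
    (h : fand a (neg b) = fand a (neg T)) : fand a b = a := by
  have h1 := and_absorb hS3 hS4 hS8 a (neg b)
  rw [h, and_absorb hS3 hS4 hS8, hS3, hS3, hS9 a T, hS7] at h1
  exact h1.symm

theorem and_self_eq (hS3 : ∀ x, neg (neg x) = x)
    (hS4 : ∀ x y, neg (fand x y) = forr (neg x) (neg y))
    (hS7 : ∀ x, fand T x = x)
    (hS8 : ∀ x y, forr x (fand (neg x) y) = forr x y)
    (hS9 : ∀ x y, fand x y = fand y x) (x : M) : fand x x = x :=
  and_eq_left hS3 hS4 hS7 hS8 hS9 (and_neg_self hS3 hS4 hS7 hS8 hS9 x)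

end

/-- If M with ¬, ∧, ∨ and constant T satisfies (S3) ¬¬x = x,
(S4) ¬(x ∧ y) = ¬x ∨ ¬y, (S6) associativity of ∧, (S7) T ∧ x = x,
(S8) x ∨ (¬x ∧ y) = x ∨ y and (S9) commutativity of ∧, then M satisfies the
distributive law (S10) x ∧ (y ∨ z) = (x ∧ y) ∨ (x ∧ z). -/
theorem stmt_18 {M : Type*} (neg : M → M) (fand forr : M → M → M) (T : M)
    (hS3 : ∀ x, neg (neg x) = x)
    (hS4 : ∀ x y, neg (fand x y) = forr (neg x) (neg y))
    (hS6 : ∀ x y z, fand (fand x y) z = fand x (fand y z))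
    (hS7 : ∀ x, fand T x = x)
    (hS8 : ∀ x y, forr x (fand (neg x) y) = forr x y)
    (hS9 : ∀ x y, fand x y = fand y x) :
    ∀ x y z, fand x (forr y z) = forr (fand x y) (fand x z) := by
  intro x y z
  have absorb := and_absorb hS3 hS4 hS8
  have negSelf := and_neg_self hS3 hS4 hS7 hS8 hS9
  have negBot := neg_and_bot hS3 hS4 hS7 hS8 hS9
  have idem := and_self_eq hS3 hS4 hS7 hS8 hS9
  have below : ∀ {a b : M}, fand a (neg b) = fand a (neg T) → fand a b = a :=
    and_eq_left hS3 hS4 hS7 hS8 hS9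
  have : Std.Associative fand := ⟨hS6⟩
  have : Std.Commutative fand := ⟨hS9⟩
  have : Std.IdempotentOp fand := ⟨idem⟩
  -- Negations may be dropped from any factor of a product containing `¬T`.
  have dropNeg : ∀ u v, fand (fand (neg u) v) (neg T) = fand (fand u v) (neg T) := by
    intro u v
    calc _ = fand (fand (neg u) (neg T)) v := by ac_rfl
      _ = fand (fand u (neg T)) v := by rw [negBot]
      _ = _ := by ac_rfl
  have orBot : ∀ u v, fand (neg (fand (neg u) (neg v))) (neg T) = fand (fand u v) (neg T) := by
    intro u v
    rw [negBot, dropNeg, hS9 u, dropNeg, hS9 v]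
  rw [or_eq hS3 hS4 y z, or_eq hS3 hS4 (fand x y)]
  set a := fand x (neg (fand (neg y) (neg z))) with ha
  set b := neg (fand (neg (fand x y)) (neg (fand x z))) with hb
  have aBot : fand a (neg T) = fand (fand x (fand y z)) (neg T) := by
    rw [ha, hS6, orBot, ← hS6]
  have bBot : fand b (neg T) = fand (fand x (fand y z)) (neg T) := by
    rw [hb, orBot]; ac_rfl
  have hab : fand a (neg b) = fand a (neg T) := by
    rw [aBot, ha, hb, hS3]
    calc _ = fand (fand (fand x (neg (fand x y))) (fand x (neg (fand x z))))
          (neg (fand (neg y) (neg z))) := by ac_rfl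
      _ = fand (fand (fand x (neg y)) (fand x (neg z))) (neg (fand (neg y) (neg z))) := by
          rw [absorb, absorb]
      _ = fand x (fand (fand (neg y) (neg z)) (neg (fand (neg y) (neg z)))) := by ac_rfl
      _ = fand x (fand (fand (neg y) (neg z)) (neg T)) := by rw [negSelf]
      _ = fand x (fand (fand y z) (neg T)) := by rw [dropNeg, hS9 y, dropNeg, hS9 z]
      _ = _ := by ac_rfl
  have meet : ∀ v w, fand (fand x v) (neg (fand x (neg (fand (neg v) (neg w))))) =
      fand (fand x (fand v w)) (neg T) := by
    intro v w
    calc _ = fand v (fand x (neg (fand x (neg (fand (neg v) (neg w)))))) := by ac_rfl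
      _ = fand x (fand (fand v (neg v)) (neg w)) := by rw [absorb, hS3]; ac_rfl
      _ = fand (fand x v) (fand (neg w) (neg T)) := by rw [negSelf]; ac_rfl
      _ = _ := by rw [negBot]; ac_rfl
  -- `¬a` is below the negation of either disjunct `x ∧ y`, `x ∧ z` of `b`.
  have hy : fand (neg a) (neg (fand x y)) = neg a := by
    apply below
    rw [hS3, negBot, aBot, hS9, ha, meet]
  have hz : fand (neg a) (neg (fand x z)) = neg a := by
    apply below
    rw [hS3, negBot, aBot, hS9, ha, hS9 (neg y), meet, hS9 z]
  have hnab : fand (neg a) (neg b) = neg a := by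
    rw [hb, hS3, ← hS6, hy, hz]
  have hba : fand b (neg a) = fand b (neg T) := by
    calc _ = fand (neg a) (fand b (neg b)) := by rw [← hnab]; ac_rfl
      _ = fand b (fand (neg a) (neg T)) := by rw [negSelf]; ac_rfl
      _ = fand b (fand b (neg T)) := by rw [negBot, aBot, bBot]
      _ = _ := by rw [← hS6, idem]
  rw [← below hab, hS9, below hba]
end

section
/- Let M be a set with a ternary operation x ◁ y ▷ z and distinguished elements T and F satisfying, for all elements, (CP1) x ◁ T ▷ y = x, (CP2) x ◁ F ▷ y = y, (CP3) T ◁ x ▷ F = x, (CP4) x ◁ (y ◁ z ▷ u) ▷ v = (x ◁ y ▷ v) ◁ z ▷ (x ◁ u ▷ v), and (CPmem) x ◁ y ▷ (z ◁ u ▷ (v ◁ y ▷ w)) = x ◁ y ▷ (z ◁ u ▷ w). Define ¬x = F ◁ x ▷ T, x ⩓ y = y ◁ x ▷ F, and x ⩔ y = T ◁ x ▷ y. Then for all x, y, z in M: (x ⩓ y) ⩔ (¬x ⩓ z) = y ◁ x ▷ z. (In memorising short-circuit logic, Hoare's conditional 'if x then y else z' is expressible by the short-circuit connectives and negation.) 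-/
/-- In any algebra satisfying CP + (CPmem) (with `c x y z` read
`x ◁ y ▷ z`, i.e. "if y then x else z"), defining ¬x = F ◁ x ▷ T, x ⩓ y = y ◁ x ▷ F
and x ⩔ y = T ◁ x ▷ y, one has (x ⩓ y) ⩔ (¬x ⩓ z) = y ◁ x ▷ z for all x, y, z. -/
theorem stmt_19 {M : Type*} (c : M → M → M → M) (T F : M)
    (cp1 : ∀ x y, c x T y = x)
    (cp2 : ∀ x y, c x F y = y)
    (cp3 : ∀ x, c T x F = x)
    (cp4 : ∀ x y z u v, c x (c y z u) v = c (c x y v) z (c x u v))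
    (cpmem : ∀ x y z u v w, c x y (c z u (c v y w)) = c x y (c z u w))
    (neg : M → M) (scand scor : M → M → M)
    (hneg : ∀ x, neg x = c F x T)
    (hand : ∀ x y, scand x y = c y x F)
    (hor : ∀ x y, scor x y = c T x y) :
    ∀ x y z, scor (scand x y) (scand (neg x) z) = c y x z := by
  intro x y z
  -- Negating the guard swaps the branches; this turns (CPmem), a law about the
  -- false branch, into the corresponding law about the true branch.
  have swap : ∀ a b d, c a (c F b T) d = c d b a := fun a b d => by
    rw [cp4, cp1, cp2]
  -- A guard already found false stays false: (CPmem) with middle guard `F`.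
  have memFalse : ∀ a b v w, c a b (c v b w) = c a b w := fun a b v w => by
    simpa only [cp2] using cpmem a b F F v w
  have memTrue : ∀ a b u v w d, c (c a u (c v b w)) b d = c (c a u v) b d :=
    fun a b u v w d => by
      rw [← swap d b, ← swap w b v, cpmem, swap]
  rw [hor, hand, hand, hneg, swap, cp4, cp2, memFalse, memTrue, cp3]
end
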